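/- arXiv:1706.06479 — 5 statements merged into one kernel-verified Lean document; each statement's English description precedes it below -/
import Mathlib

section
/- Equivalence of magnetic and free gradients in dyadic-weighted norms: there is a universal constant C such that for every measurable A : ℝ³ → ℝ³ with ‖A‖_{ℓ^∞L³} < ∞ and every v ∈ 𝒮(ℝ³;ℂ⁴), one has ‖∇v‖_Ẏ ≤ C (1 + ‖A‖_{ℓ^∞L³}) ( ‖∂^A v‖_Ẏ + ‖v‖_Ẋ ). -/
open MeasureTheory Metric Complex
open scoped ENNReal

noncomputable section

abbrev E3 := EuclideanSpace ℝ (Fin 3)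
abbrev C4 := Fin 4 → ℂ

def e3 (j : Fin 3) : E3 := EuclideanSpace.single j 1

def partialD (j : Fin 3) (f : E3 → C4) (x : E3) : C4 :=
  fun k => fderiv ℝ (fun y => f y k) x (e3 j)

def normSq4 (z : C4) : ℝ := ∑ k, Complex.normSq (z k)

/-- the magnetic derivative ∂ⱼᴬ = ∂ⱼ + iAⱼ -/
def dMag (A : E3 → Fin 3 → ℝ) (j : Fin 3) (f : E3 → C4) : E3 → C4 :=
  fun x => partialD j f x + (Complex.I * (A x j : ℝ)) • f x

def ann (j : ℤ) : Set E3 := {x | (2:ℝ)^j ≤ ‖x‖ ∧ ‖x‖ < (2:ℝ)^(j+1)}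

/-- the dyadic ℓ^∞L³ norm of a vector field -/
def linfL3 (A : E3 → Fin 3 → ℝ) : ℝ≥0∞ :=
  ⨆ j : ℤ, eLpNorm (fun x => Real.sqrt (∑ i : Fin 3, (A x i)^2)) 3 (volume.restrict (ann j))

/-- the integral of `g` over the sphere of radius `r` with respect to surface measure -/
def sphInt (g : E3 → ℝ≥0∞) (r : ℝ) : ℝ≥0∞ :=
  ENNReal.ofReal (r^2) *
    ∫⁻ ω : Metric.sphere (0 : E3) 1, g (r • (ω : E3)) ∂((volume : Measure E3).toSphere)

/-- squared Ẋ norm -/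
def Xnorm2 (g : E3 → ℝ≥0∞) : ℝ≥0∞ :=
  ⨆ (R : ℝ) (_ : 0 < R), (ENNReal.ofReal (R^2))⁻¹ * sphInt g R

/-- squared Ẏ norm -/
def Ynorm2 (g : E3 → ℝ≥0∞) : ℝ≥0∞ :=
  ⨆ (R : ℝ) (_ : 0 < R), (ENNReal.ofReal R)⁻¹ * ∫⁻ x in {x : E3 | ‖x‖ ≤ R}, g x


lemma normSq4_nonneg (z : C4) : 0 ≤ normSq4 z :=
  Finset.sum_nonneg fun _ _ => Complex.normSq_nonneg _

/-- polar coordinates bound for the L² norm on a ball -/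
lemma ball_le_Xnorm2 (g : E3 → ℝ≥0∞) (hg : Measurable g) (R : ℝ) (hR : 0 < R) :
    ∫⁻ x in {x : E3 | ‖x‖ < R}, g x ≤ ENNReal.ofReal (R^3) * Xnorm2 g := by
  have hmp := (volume : Measure E3).measurePreserving_homeomorphUnitSphereProd
  have hfin : Module.finrank ℝ E3 = 3 := by simp
  rw [hfin] at hmp
  set G : E3 → ℝ≥0∞ := Set.indicator {x : E3 | ‖x‖ < R} g with hG
  have hms : MeasurableSet {x : E3 | ‖x‖ < R} := measurableSet_lt measurable_norm measurable_const
  have hGm : Measurable G := hg.indicator hms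
  have h1 : ∫⁻ x in {x : E3 | ‖x‖ < R}, g x = ∫⁻ x, G x := (lintegral_indicator hms g).symm
  have h2 : ∫⁻ x, G x = ∫⁻ x : ({0}ᶜ : Set E3), G x ∂(Measure.comap (↑) (volume : Measure E3)) := by
    rw [lintegral_subtype_comap (measurableSet_singleton _).compl, restrict_compl_singleton]
  have h3 : ∫⁻ x : ({0}ᶜ : Set E3), G x ∂(Measure.comap (↑) (volume : Measure E3)) =
      ∫⁻ p : Metric.sphere (0 : E3) 1 × Set.Ioi (0:ℝ), G (p.2.1 • (p.1 : E3))
        ∂((volume : Measure E3).toSphere.prod (Measure.volumeIoiPow 2)) := by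
    rw [← hmp.lintegral_comp_emb (Homeomorph.measurableEmbedding _)]
    refine lintegral_congr fun x => ?_
    congr 1
    have hx : ‖(x : E3)‖ ≠ 0 := norm_ne_zero_iff.2 x.2
    simp [smul_smul, hx]
  rw [h1, h2, h3, lintegral_prod_symm _ (by
    refine Measurable.aemeasurable (hGm.comp ?_); fun_prop)]
  have h4 : ∀ r : Set.Ioi (0:ℝ), ∫⁻ ω : Metric.sphere (0 : E3) 1, G (r.1 • (ω : E3))
      ∂((volume : Measure E3).toSphere) ≤
      Set.indicator (Set.Iio (⟨R, hR⟩ : Set.Ioi (0:ℝ))) (fun _ => Xnorm2 g) r := by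
    rintro ⟨r, hr⟩
    have hr' : 0 < r := hr
    by_cases hrR : r < R
    · rw [Set.indicator_of_mem (by exact hrR)]
      refine le_trans (lintegral_mono fun ω => Set.indicator_le_self _ _ _) ?_
      refine le_trans (le_of_eq ?_) (le_iSup₂ (f := fun (R : ℝ) (_ : 0 < R) =>
        (ENNReal.ofReal (R^2))⁻¹ * sphInt g R) r hr')
      simp only [sphInt]
      rw [← mul_assoc, ENNReal.inv_mul_cancel, one_mul]
      · simpa using hr'.ne'
      · simp
    · rw [Set.indicator_of_notMem (by exact hrR)]
      refine le_of_eq ?_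
      rw [lintegral_eq_zero_iff' ]
      · refine Filter.Eventually.of_forall fun ω => ?_
        apply Set.indicator_of_notMem
        simp [norm_smul, abs_of_pos hr']
        exact not_lt.1 hrR
      · refine Measurable.aemeasurable (hGm.comp ?_); fun_prop
  refine le_trans (lintegral_mono h4) ?_
  rw [lintegral_indicator measurableSet_Iio, setLIntegral_const, Measure.volumeIoiPow_apply_Iio,
    mul_comm]
  gcongr
  norm_num
  have : 0 < R^3 := by positivity
  linarith

/-- Cauchy–Schwarz with the magnetic term dropping out -/
lemma diamag_alg (z d : C4) (a : ℝ) :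
    (∑ k, inner ℝ (z k) (d k)) ^ 2 ≤ normSq4 z * normSq4 (d + (Complex.I * (a : ℝ)) • z) := by
  have h : ∑ k, inner ℝ (z k) (d k) = ∑ k, inner ℝ (z k) ((d + (Complex.I * (a : ℝ)) • z) k) := by
    refine Finset.sum_congr rfl fun k _ => ?_
    simp [Complex.inner]
    ring
  rw [h]
  have h2 : |∑ k, inner ℝ (z k) ((d + (Complex.I * (a : ℝ)) • z) k)| ≤
      ∑ k, ‖z k‖ * ‖(d + (Complex.I * (a : ℝ)) • z) k‖ :=
    (Finset.abs_sum_le_sum_abs _ _).trans (Finset.sum_le_sum fun k _ => abs_real_inner_le_norm _ _)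
  rw [← sq_abs]
  refine (pow_le_pow_left₀ (abs_nonneg _) h2 2).trans ?_
  refine (Finset.sum_mul_sq_le_sq_mul_sq _ _ _).trans (le_of_eq ?_)
  simp [normSq4, Complex.normSq_eq_norm_sq]

lemma opNorm_le_of_coords (l : E3 →L[ℝ] ℝ) (D : ℝ) (h : ∑ j, (l (e3 j))^2 ≤ D) :
    ‖l‖ ≤ Real.sqrt D := by
  refine l.opNorm_le_bound (Real.sqrt_nonneg _) fun w => ?_
  have hw : w = ∑ j, w j • e3 j := by
    have := (EuclideanSpace.basisFun (Fin 3) ℝ).sum_repr w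
    simp only [EuclideanSpace.basisFun_apply, EuclideanSpace.basisFun_repr] at this
    exact this.symm
  have h1 : l w = ∑ j, l (e3 j) * w j := by
    conv_lhs => rw [hw]
    simp [mul_comm]
  rw [Real.norm_eq_abs, h1, EuclideanSpace.norm_eq, ← Real.sqrt_mul' _ (by positivity)]
  apply Real.abs_le_sqrt
  refine (Finset.sum_mul_sq_le_sq_mul_sq _ _ _).trans ?_
  simp only [Real.norm_eq_abs, sq_abs]
  gcongr

/-- regularised modulus -/
def modE (ε : ℝ) (v : E3 → C4) (x : E3) : ℝ := Real.sqrt (normSq4 (v x) + ε^2)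

lemma contDiff_normSq4 (v : SchwartzMap E3 C4) : ContDiff ℝ 1 (fun x => normSq4 (v x)) := by
  have hv : ContDiff ℝ 1 v := v.smooth 1
  simp only [normSq4, Complex.normSq_eq_norm_sq]
  refine ContDiff.sum fun k _ => ContDiff.norm_sq ℝ ?_
  exact (contDiff_pi.1 hv) k

lemma modE_contDiff (ε : ℝ) (hε : 0 < ε) (v : SchwartzMap E3 C4) : ContDiff ℝ 1 (modE ε v) := by
  refine ContDiff.sqrt ((contDiff_normSq4 v).add contDiff_const) fun x => ?_
  have := normSq4_nonneg (v x)
  positivity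

lemma modE_fderiv (ε : ℝ) (hε : 0 < ε) (v : SchwartzMap E3 C4) (A : E3 → Fin 3 → ℝ) (x : E3) :
    ‖fderiv ℝ (modE ε v) x‖ ≤ Real.sqrt (∑ j : Fin 3, normSq4 (dMag A j (⇑v) x)) := by
  have hn := normSq4_nonneg (v x)
  have hv : ContDiff ℝ 1 v := v.smooth 1
  have hk : ∀ k, HasFDerivAt (fun y => v y k) (fderiv ℝ (fun y => v y k) x) x := fun k =>
    (((contDiff_pi.1 hv) k).differentiable one_ne_zero x).hasFDerivAt
  have h1 : HasFDerivAt (fun y => normSq4 (v y) + ε^2)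
      (∑ k, 2 • (innerSL ℝ (v x k)).comp (fderiv ℝ (fun y => v y k) x)) x := by
    have := HasFDerivAt.fun_sum (u := Finset.univ) fun k _ => (hk k).norm_sq
    simp only [normSq4, Complex.normSq_eq_norm_sq]
    exact this.add_const _
  have h2 := h1.sqrt (by positivity)
  have h3 : fderiv ℝ (modE ε v) x = _ := h2.fderiv
  apply opNorm_le_of_coords
  refine Finset.sum_le_sum fun j _ => ?_
  have h4 : fderiv ℝ (modE ε v) x (e3 j) =
      (∑ k, inner ℝ (v x k) (partialD j v x k)) / Real.sqrt (normSq4 (v x) + ε^2) := by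
    rw [h3]
    simp [partialD]
    field_simp
    rw [Finset.mul_sum]
  rw [h4, div_pow, Real.sq_sqrt (by positivity), div_le_iff₀ (by positivity)]
  refine (diamag_alg _ _ (A x j)).trans ?_
  have := normSq4_nonneg (dMag A j v x)
  change normSq4 (v x) * normSq4 (dMag A j v x) ≤ _
  nlinarith [mul_nonneg this (sq_nonneg ε)]

lemma cutoff_exists : ∃ M : ℝ, 0 ≤ M ∧ ∀ R : ℝ, 0 < R → ∃ χ : E3 → ℝ, ContDiff ℝ 1 χ ∧
    HasCompactSupport χ ∧ (∀ x, 0 ≤ χ x ∧ χ x ≤ 1) ∧ (∀ x, ‖x‖ ≤ R → χ x = 1) ∧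
    (∀ x, 2 * R < ‖x‖ → χ x = 0) ∧ (∀ x, ‖fderiv ℝ χ x‖ ≤ M / R) ∧
    (∀ x, 2 * R < ‖x‖ → fderiv ℝ χ x = 0) := by
  let φ : ContDiffBump (0 : E3) := ⟨1, 2, by norm_num, by norm_num⟩
  have hφ : ContDiff ℝ 1 φ := φ.contDiff
  obtain ⟨M, hM⟩ := (φ.hasCompactSupport.fderiv (𝕜 := ℝ)).exists_bound_of_continuous
    (hφ.continuous_fderiv one_ne_zero)
  refine ⟨M, (norm_nonneg _).trans (hM 0), fun R hR => ?_⟩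
  have hz : ∀ x : E3, 2 * R < ‖x‖ → φ (R⁻¹ • x) = 0 := by
    intro x hx
    apply φ.zero_of_le_dist
    rw [dist_zero_right, norm_smul, norm_inv, Real.norm_eq_abs, abs_of_pos hR, inv_mul_eq_div,
      le_div_iff₀ hR]
    exact hx.le
  refine ⟨fun x => φ (R⁻¹ • x), hφ.comp (contDiff_const_smul _), ?_, fun x => ⟨φ.nonneg, φ.le_one⟩,
    ?_, hz, ?_, ?_⟩
  · refine HasCompactSupport.intro (isCompact_closedBall (0 : E3) (2 * R)) fun x hx => hz x ?_
    simpa using hx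
  · intro x hx
    apply φ.one_of_mem_closedBall
    rw [mem_closedBall_zero_iff, norm_smul, norm_inv, Real.norm_eq_abs, abs_of_pos hR,
      inv_mul_eq_div, div_le_iff₀ hR]
    simpa [φ] using hx
  · intro x
    have h1 : HasFDerivAt (fun x : E3 => φ (R⁻¹ • x))
        ((fderiv ℝ φ (R⁻¹ • x)).comp (R⁻¹ • ContinuousLinearMap.id ℝ E3)) x := by
      have hg : HasFDerivAt (fun y => φ y) (fderiv ℝ φ (R⁻¹ • x)) (R⁻¹ • x) :=
        (hφ.differentiable one_ne_zero _).hasFDerivAt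
      have hf : HasFDerivAt (fun y : E3 => R⁻¹ • y) (R⁻¹ • ContinuousLinearMap.id ℝ E3) x :=
        (hasFDerivAt_id x).const_smul R⁻¹
      exact HasFDerivAt.comp (g := fun y => φ y) (f := fun y : E3 => R⁻¹ • y) x hg hf
    rw [h1.fderiv]
    rw [ContinuousLinearMap.comp_smul, ContinuousLinearMap.comp_id, norm_smul, norm_inv,
      Real.norm_eq_abs, abs_of_pos hR, inv_mul_eq_div]
    gcongr
    exact hM _
  · intro x hx
    have : (fun x : E3 => φ (R⁻¹ • x)) =ᶠ[nhds x] fun _ => 0 := by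
      filter_upwards [(isOpen_lt continuous_const continuous_norm).mem_nhds hx] with y hy
      exact hz y hy
    rw [this.fderiv_eq]
    simp

lemma eLpNorm_sqrt_two (g : E3 → ℝ) (hg : ∀ x, 0 ≤ g x) (μ : Measure E3) :
    eLpNorm (fun x => Real.sqrt (g x)) 2 μ = (∫⁻ x, ENNReal.ofReal (g x) ∂μ) ^ (1/2 : ℝ) := by
  rw [eLpNorm_eq_lintegral_rpow_enorm_toReal (by norm_num) (by norm_num)]
  congr 1
  refine lintegral_congr fun x => ?_
  rw [Real.enorm_eq_ofReal (Real.sqrt_nonneg _), ENNReal.ofReal_rpow_of_nonneg (Real.sqrt_nonneg _)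
    (by simp)]
  congr 1
  simp [Real.sq_sqrt (hg x)]

lemma measurable_dsq (A : E3 → Fin 3 → ℝ) (hA : ∀ j, Measurable fun x => A x j)
    (v : SchwartzMap E3 C4) :
    Measurable fun x => ∑ j : Fin 3, normSq4 (dMag A j (⇑v) x) := by
  have hv : Measurable v := v.continuous.measurable
  have hvk : ∀ k, Measurable fun x => v x k := fun k => (measurable_pi_apply k).comp hv
  simp only [normSq4, dMag, partialD, Pi.add_apply, Pi.smul_apply, smul_eq_mul]
  refine Finset.measurable_sum _ fun j _ => Finset.measurable_sum _ fun k _ => ?_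
  refine Complex.continuous_normSq.measurable.comp ?_
  refine Measurable.add (measurable_fderiv_apply_const ℝ _ _) ?_
  exact ((Complex.measurable_ofReal.comp (hA j)).const_mul _).mul (hvk k)

lemma sobolev_ball_eps : ∃ K M : ℝ, 0 ≤ K ∧ 0 ≤ M ∧
    ∀ A : E3 → Fin 3 → ℝ, (∀ j, Measurable fun x => A x j) → ∀ v : SchwartzMap E3 C4,
    ∀ R : ℝ, 0 < R → ∀ ε : ℝ, 0 < ε →
    eLpNorm (fun x => Real.sqrt (normSq4 (v x))) 6 (volume.restrict {x : E3 | ‖x‖ ≤ R}) ≤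
      ENNReal.ofReal K *
        (eLpNorm (fun x => Real.sqrt (∑ j : Fin 3, normSq4 (dMag A j (⇑v) x))) 2
          (volume.restrict {x : E3 | ‖x‖ ≤ 2 * R}) +
        ENNReal.ofReal (M / R) * (eLpNorm (fun x => Real.sqrt (normSq4 (v x))) 2
          (volume.restrict {x : E3 | ‖x‖ ≤ 2 * R}) +
          ENNReal.ofReal ε * eLpNorm (fun _ : E3 => (1:ℝ)) 2
            (volume.restrict {x : E3 | ‖x‖ ≤ 2 * R}))) := by
  obtain ⟨M, hM0, hM⟩ := cutoff_exists
  refine ⟨eLpNormLESNormFDerivOfEqInnerConst (volume : Measure E3) ((2 : NNReal) : ℝ), M, NNReal.coe_nonneg _, hM0, ?_⟩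
  intro A hA v R hR ε hε
  obtain ⟨χ, hχ, hχc, hχ01, hχ1, hχ0, hχd, hχd0⟩ := hM R hR
  have hmE := modE_contDiff ε hε v
  have hS1 : MeasurableSet {x : E3 | ‖x‖ ≤ R} := measurableSet_le measurable_norm measurable_const
  have hS2 : MeasurableSet {x : E3 | ‖x‖ ≤ 2 * R} :=
    measurableSet_le measurable_norm measurable_const
  set D : E3 → ℝ := fun x => Real.sqrt (∑ j : Fin 3, normSq4 (dMag A j (⇑v) x)) with hD
  set n : E3 → ℝ := fun x => Real.sqrt (normSq4 (v x)) with hn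
  have hDm : Measurable D := (measurable_dsq A hA v).sqrt
  have hnm : Measurable n := (contDiff_normSq4 v).continuous.measurable.sqrt
  have hn0 : ∀ x, 0 ≤ n x := fun x => Real.sqrt_nonneg _
  have hmod0 : ∀ x, 0 ≤ modE ε v x := fun x => Real.sqrt_nonneg _
  have hmod1 : ∀ x, n x ≤ modE ε v x := fun x => Real.sqrt_le_sqrt (by nlinarith [sq_nonneg ε])
  have hmod2 : ∀ x, modE ε v x ≤ n x + ε := fun x => by
    apply Real.sqrt_le_iff.2
    refine ⟨add_nonneg (hn0 x) hε.le, ?_⟩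
    have : n x ^ 2 = normSq4 (v x) := Real.sq_sqrt (normSq4_nonneg _)
    nlinarith [hn0 x, mul_nonneg (hn0 x) hε.le]
  set u : E3 → ℝ := fun x => χ x * modE ε v x with hu
  have huc : ContDiff ℝ 1 u := hχ.mul hmE
  have hus : HasCompactSupport u := hχc.mul_right
  have hsob := eLpNorm_le_eLpNorm_fderiv_of_eq_inner (volume : Measure E3) huc hus
    (p := 2) (p' := 6) (by norm_num) (by simp) (by simp; norm_num)
  have hL : eLpNorm n 6 (volume.restrict {x : E3 | ‖x‖ ≤ R}) ≤ eLpNorm u 6 volume := by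
    rw [← eLpNorm_indicator_eq_eLpNorm_restrict hS1]
    refine eLpNorm_mono fun x => ?_
    by_cases hx : ‖x‖ ≤ R
    · rw [Set.indicator_of_mem (by exact hx), Real.norm_eq_abs, Real.norm_eq_abs,
        abs_of_nonneg (hn0 x), hu]
      simp only [hχ1 x hx, one_mul]
      exact (hmod1 x).trans (le_abs_self _)
    · rw [Set.indicator_of_notMem (by exact hx)]
      simp
  have hRt : eLpNorm (fderiv ℝ u) 2 volume ≤
      eLpNorm (D + (M / R) • (n + ε • fun _ : E3 => (1:ℝ))) 2
        (volume.restrict {x : E3 | ‖x‖ ≤ 2 * R}) := by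
    rw [← eLpNorm_indicator_eq_eLpNorm_restrict hS2]
    refine eLpNorm_mono fun x => ?_
    have hfd : fderiv ℝ u x = χ x • fderiv ℝ (modE ε v) x + modE ε v x • fderiv ℝ χ x :=
      fderiv_fun_mul (hχ.differentiable one_ne_zero x) (hmE.differentiable one_ne_zero x)
    by_cases hx : ‖x‖ ≤ 2 * R
    · rw [Set.indicator_of_mem (by exact hx), hfd]
      refine (norm_add_le _ _).trans ((le_abs_self _).trans' ?_)
      rw [norm_smul, norm_smul, Real.norm_eq_abs, Real.norm_eq_abs, abs_of_nonneg (hχ01 x).1,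
        abs_of_nonneg (hmod0 x)]
      simp only [Pi.add_apply, Pi.smul_apply, smul_eq_mul, mul_one]
      refine add_le_add ?_ ?_
      · exact (mul_le_of_le_one_left (norm_nonneg _) (hχ01 x).2).trans (modE_fderiv ε hε v A x)
      · rw [mul_comm]
        exact mul_le_mul (hχd x) (hmod2 x) (hmod0 x) (by positivity)
    · rw [Set.indicator_of_notMem (by exact hx), hfd, hχ0 x (not_le.1 hx), hχd0 x (not_le.1 hx)]
      simp
  refine hL.trans (hsob.trans ?_)
  rw [ENNReal.ofReal_coe_nnreal]
  refine mul_le_mul' le_rfl ?_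
  refine hRt.trans ((eLpNorm_add_le hDm.aestronglyMeasurable ?_ (by norm_num)).trans ?_)
  · exact ((hnm.add measurable_const).const_smul (M / R)).aestronglyMeasurable
  gcongr
  rw [eLpNorm_const_smul, Real.enorm_eq_ofReal (by positivity)]
  gcongr
  refine (eLpNorm_add_le hnm.aestronglyMeasurable
    (by exact aestronglyMeasurable_const) (by norm_num)).trans ?_
  rw [eLpNorm_const_smul, Real.enorm_eq_ofReal hε.le]

lemma sobolev_ball : ∃ K M : ℝ, 0 ≤ K ∧ 0 ≤ M ∧
    ∀ A : E3 → Fin 3 → ℝ, (∀ j, Measurable fun x => A x j) → ∀ v : SchwartzMap E3 C4,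
    ∀ R : ℝ, 0 < R →
    eLpNorm (fun x => Real.sqrt (normSq4 (v x))) 6 (volume.restrict {x : E3 | ‖x‖ ≤ R}) ≤
      ENNReal.ofReal K *
        (eLpNorm (fun x => Real.sqrt (∑ j : Fin 3, normSq4 (dMag A j (⇑v) x))) 2
          (volume.restrict {x : E3 | ‖x‖ ≤ 2 * R}) +
        ENNReal.ofReal (M / R) * (eLpNorm (fun x => Real.sqrt (normSq4 (v x))) 2
          (volume.restrict {x : E3 | ‖x‖ ≤ 2 * R}))) := by
  obtain ⟨K, M, hK, hM, h⟩ := sobolev_ball_eps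
  refine ⟨K, M, hK, hM, fun A hA v R hR => ?_⟩
  have h1 := h A hA v R hR
  set Q := eLpNorm (fun _ : E3 => (1:ℝ)) 2 (volume.restrict {x : E3 | ‖x‖ ≤ 2 * R}) with hQ
  have hQt : Q ≠ ⊤ := by
    have : IsFiniteMeasure (volume.restrict {x : E3 | ‖x‖ ≤ 2 * R}) := by
      refine ⟨?_⟩
      rw [Measure.restrict_apply_univ]
      have : {x : E3 | ‖x‖ ≤ 2 * R} = Metric.closedBall 0 (2 * R) := by ext; simp
      rw [this]
      exact measure_closedBall_lt_top
    exact (memLp_const (1:ℝ)).eLpNorm_ne_top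
  have ht : Filter.Tendsto (fun ε : ℝ => ENNReal.ofReal ε * Q) (nhdsWithin 0 (Set.Ioi 0)) (nhds 0) := by
    have h0 : Filter.Tendsto (fun ε : ℝ => ENNReal.ofReal ε) (nhdsWithin 0 (Set.Ioi 0)) (nhds 0) := by
      have := (ENNReal.continuous_ofReal.tendsto 0).mono_left
        (nhdsWithin_le_nhds (s := Set.Ioi (0:ℝ)))
      simpa using this
    simpa using ENNReal.Tendsto.mul_const h0 (Or.inr hQt)
  have ht2 := ENNReal.Tendsto.const_mul (a := ENNReal.ofReal K) (ENNReal.Tendsto.const_mul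
    (a := ENNReal.ofReal (M / R)) (ht.const_add
      (eLpNorm (fun x => Real.sqrt (normSq4 (v x))) 2 (volume.restrict {x : E3 | ‖x‖ ≤ 2 * R})))
      (Or.inr ENNReal.ofReal_ne_top) |>.const_add
      (eLpNorm (fun x => Real.sqrt (∑ j : Fin 3, normSq4 (dMag A j (⇑v) x))) 2
          (volume.restrict {x : E3 | ‖x‖ ≤ 2 * R}))) (Or.inr ENNReal.ofReal_ne_top)
  rw [add_zero] at ht2
  refine ge_of_tendsto ht2 ?_
  filter_upwards [self_mem_nhdsWithin] with ε hε
  exact h1 ε hε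

lemma ball_le_Ynorm2 (g : E3 → ℝ≥0∞) (R : ℝ) (hR : 0 < R) :
    ∫⁻ x in {x : E3 | ‖x‖ ≤ R}, g x ≤ ENNReal.ofReal R * Ynorm2 g := by
  have h := le_iSup₂ (f := fun (R : ℝ) (_ : 0 < R) =>
    (ENNReal.ofReal R)⁻¹ * ∫⁻ x in {x : E3 | ‖x‖ ≤ R}, g x) R hR
  have h' : (ENNReal.ofReal R)⁻¹ * ∫⁻ x in {x : E3 | ‖x‖ ≤ R}, g x ≤ Ynorm2 g := h
  rwa [ENNReal.inv_mul_le_iff (by simpa using hR) ENNReal.ofReal_ne_top] at h'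

lemma l6_ball : ∃ K : ℝ, 0 ≤ K ∧
    ∀ A : E3 → Fin 3 → ℝ, (∀ j, Measurable fun x => A x j) → ∀ v : SchwartzMap E3 C4,
    ∀ R : ℝ, 0 < R →
    eLpNorm (fun x => Real.sqrt (normSq4 (v x))) 6 (volume.restrict {x : E3 | ‖x‖ ≤ R}) ≤
      ENNReal.ofReal (K * Real.sqrt R) *
        ((Ynorm2 (fun x =>
            ENNReal.ofReal (∑ j : Fin 3, normSq4 (dMag A j (⇑v) x)))) ^ (1/2 : ℝ)
          + (Xnorm2 (fun x => ENNReal.ofReal (normSq4 (v x)))) ^ (1/2 : ℝ)) := by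
  obtain ⟨K, M, hK, hM, h⟩ := sobolev_ball
  refine ⟨K * (2 + 6 * M), by positivity, fun A hA v R hR => (h A hA v R hR).trans ?_⟩
  set Y := Ynorm2 (fun x => ENNReal.ofReal (∑ j : Fin 3, normSq4 (dMag A j (⇑v) x)))
  set X := Xnorm2 (fun x => ENNReal.ofReal (normSq4 (v x)))
  have hY : eLpNorm (fun x => Real.sqrt (∑ j : Fin 3, normSq4 (dMag A j (⇑v) x))) 2
      (volume.restrict {x : E3 | ‖x‖ ≤ 2 * R}) ≤
      ENNReal.ofReal (2 * Real.sqrt R) * Y ^ (1/2 : ℝ) := by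
    rw [eLpNorm_sqrt_two _ (fun x => Finset.sum_nonneg fun _ _ => normSq4_nonneg _)]
    refine (ENNReal.rpow_le_rpow (ball_le_Ynorm2 _ (2 * R) (by positivity))
      (by norm_num)).trans ?_
    rw [ENNReal.mul_rpow_of_nonneg _ _ (by norm_num)]
    gcongr
    rw [ENNReal.ofReal_rpow_of_nonneg (by positivity) (by norm_num)]
    apply ENNReal.ofReal_le_ofReal
    rw [← Real.sqrt_eq_rpow]
    apply Real.sqrt_le_iff.2
    refine ⟨by positivity, ?_⟩
    rw [mul_pow, Real.sq_sqrt hR.le]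
    linarith
  have hX : eLpNorm (fun x => Real.sqrt (normSq4 (v x))) 2
      (volume.restrict {x : E3 | ‖x‖ ≤ 2 * R}) ≤
      ENNReal.ofReal (6 * R * Real.sqrt R) * X ^ (1/2 : ℝ) := by
    rw [eLpNorm_sqrt_two _ (fun x => normSq4_nonneg _)]
    have hsub : {x : E3 | ‖x‖ ≤ 2 * R} ⊆ {x : E3 | ‖x‖ < 3 * R} := by
      intro x (hx : ‖x‖ ≤ 2 * R)
      change ‖x‖ < 3 * R
      linarith
    refine (ENNReal.rpow_le_rpow ((lintegral_mono_set hsub).trans (ball_le_Xnorm2 _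
      (contDiff_normSq4 v).continuous.measurable.ennreal_ofReal (3 * R) (by positivity)))
      (by norm_num)).trans ?_
    rw [ENNReal.mul_rpow_of_nonneg _ _ (by norm_num)]
    gcongr
    rw [ENNReal.ofReal_rpow_of_nonneg (by positivity) (by norm_num)]
    apply ENNReal.ofReal_le_ofReal
    rw [← Real.sqrt_eq_rpow]
    apply Real.sqrt_le_iff.2
    refine ⟨by positivity, ?_⟩
    rw [mul_pow (6 * R), Real.sq_sqrt hR.le]
    nlinarith [pow_pos hR 3]
  calc _ ≤ ENNReal.ofReal K * (ENNReal.ofReal (2 * Real.sqrt R) * Y ^ (1/2 : ℝ) +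
        ENNReal.ofReal (M / R) * (ENNReal.ofReal (6 * R * Real.sqrt R) * X ^ (1/2 : ℝ))) := by
        gcongr
    _ = ENNReal.ofReal K * (ENNReal.ofReal (2 * Real.sqrt R) * Y ^ (1/2 : ℝ) +
        ENNReal.ofReal (6 * M * Real.sqrt R) * X ^ (1/2 : ℝ)) := by
        rw [← mul_assoc (ENNReal.ofReal (M / R)), ← ENNReal.ofReal_mul (by positivity)]
        congr 4
        field_simp
    _ ≤ ENNReal.ofReal K * (ENNReal.ofReal ((2 + 6 * M) * Real.sqrt R) * Y ^ (1/2 : ℝ) +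
        ENNReal.ofReal ((2 + 6 * M) * Real.sqrt R) * X ^ (1/2 : ℝ)) := by
        gcongr
        · linarith
        · linarith
    _ = _ := by
        rw [← mul_add, ← mul_assoc, ← ENNReal.ofReal_mul hK, mul_assoc]

lemma ann_bound : ∃ K : ℝ, 0 ≤ K ∧
    ∀ A : E3 → Fin 3 → ℝ, (∀ j, Measurable fun x => A x j) → ∀ v : SchwartzMap E3 C4,
    ∀ j : ℤ,
    ∫⁻ x in ann j, ENNReal.ofReal ((∑ i : Fin 3, (A x i)^2) * normSq4 (v x)) ≤
      ENNReal.ofReal (K * 2 ^ j) * (linfL3 A *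
        ((Ynorm2 (fun x =>
            ENNReal.ofReal (∑ j : Fin 3, normSq4 (dMag A j (⇑v) x)))) ^ (1/2 : ℝ)
          + (Xnorm2 (fun x => ENNReal.ofReal (normSq4 (v x)))) ^ (1/2 : ℝ))) ^ 2 := by
  obtain ⟨K, hK, h⟩ := l6_ball
  refine ⟨2 * K ^ 2, by positivity, fun A hA v j => ?_⟩
  set S := (Ynorm2 (fun x =>
            ENNReal.ofReal (∑ j : Fin 3, normSq4 (dMag A j (⇑v) x)))) ^ (1/2 : ℝ)
          + (Xnorm2 (fun x => ENNReal.ofReal (normSq4 (v x)))) ^ (1/2 : ℝ)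
  have h2 : (0:ℝ) < 2 ^ (j + 1) := by positivity
  have h6 : eLpNorm (fun x => Real.sqrt (normSq4 (v x))) 6 (volume.restrict (ann j)) ≤
      ENNReal.ofReal (K * Real.sqrt (2 ^ (j+1))) * S := by
    refine (eLpNorm_mono_measure _ (Measure.restrict_mono (fun x hx => ?_) le_rfl)).trans
      (h A hA v _ h2)
    exact hx.2.le
  have h3 : eLpNorm (fun x => Real.sqrt (∑ i : Fin 3, (A x i)^2)) 3 (volume.restrict (ann j)) ≤
      linfL3 A := le_iSup (fun j : ℤ => eLpNorm (fun x => Real.sqrt (∑ i : Fin 3, (A x i)^2)) 3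
        (volume.restrict (ann j))) j
  have hAm : Measurable fun x => Real.sqrt (∑ i : Fin 3, (A x i)^2) :=
    (Finset.measurable_sum _ fun i _ => (hA i).pow_const 2).sqrt
  have hnm : Measurable fun x => Real.sqrt (normSq4 (v x)) :=
    (contDiff_normSq4 v).continuous.measurable.sqrt
  have hHT : ENNReal.HolderTriple 3 6 2 := by
    refine ⟨?_⟩
    rw [← ENNReal.toReal_eq_toReal_iff' (by simp) (by simp), ENNReal.toReal_add (by simp) (by simp)]
    simp
    norm_num
  have hH := eLpNorm_smul_le_mul_eLpNorm (p := 3) (q := 6) (r := 2)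
    (μ := volume.restrict (ann j)) hnm.aestronglyMeasurable hAm.aestronglyMeasurable
  have heq : ((fun x => Real.sqrt (∑ i : Fin 3, (A x i)^2)) • fun x => Real.sqrt (normSq4 (v x))) =
      fun x => Real.sqrt ((∑ i : Fin 3, (A x i)^2) * normSq4 (v x)) := by
    ext x
    simp only [Pi.smul_apply', smul_eq_mul]
    rw [Real.sqrt_mul (by positivity)]
  rw [heq, eLpNorm_sqrt_two _ (fun x => mul_nonneg (by positivity) (normSq4_nonneg _))] at hH
  have hH2 := hH.trans (mul_le_mul' h3 h6)
  have hH3 := ENNReal.rpow_le_rpow hH2 (z := 2) (by norm_num)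
  rw [← ENNReal.rpow_mul] at hH3
  norm_num at hH3
  refine hH3.trans (le_of_eq ?_)
  rw [mul_left_comm, mul_pow, ← ENNReal.ofReal_pow (by positivity), mul_pow K, Real.sq_sqrt h2.le,
    zpow_add₀ (by norm_num)]
  congr 2
  ring

lemma ball_bound : ∃ K : ℝ, 0 ≤ K ∧
    ∀ A : E3 → Fin 3 → ℝ, (∀ j, Measurable fun x => A x j) → ∀ v : SchwartzMap E3 C4,
    ∀ R : ℝ, 0 < R →
    ∫⁻ x in {x : E3 | ‖x‖ ≤ R}, ENNReal.ofReal ((∑ i : Fin 3, (A x i)^2) * normSq4 (v x)) ≤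
      ENNReal.ofReal R * (ENNReal.ofReal K * (linfL3 A *
        ((Ynorm2 (fun x =>
            ENNReal.ofReal (∑ j : Fin 3, normSq4 (dMag A j (⇑v) x)))) ^ (1/2 : ℝ)
          + (Xnorm2 (fun x => ENNReal.ofReal (normSq4 (v x)))) ^ (1/2 : ℝ))) ^ 2) := by
  obtain ⟨K, hK, h⟩ := ann_bound
  refine ⟨2 * K, by positivity, fun A hA v R hR => ?_⟩
  have h1 := h A hA v
  set T := (linfL3 A *
        ((Ynorm2 (fun x =>
            ENNReal.ofReal (∑ j : Fin 3, normSq4 (dMag A j (⇑v) x)))) ^ (1/2 : ℝ)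
          + (Xnorm2 (fun x => ENNReal.ofReal (normSq4 (v x)))) ^ (1/2 : ℝ))) ^ 2
  set g : E3 → ℝ≥0∞ := fun x => ENNReal.ofReal ((∑ i : Fin 3, (A x i)^2) * normSq4 (v x))
  obtain ⟨J, hJ1, hJ2⟩ := exists_mem_Ico_zpow hR (one_lt_two (α := ℝ))
  have hsub : {x : E3 | ‖x‖ ≤ R} ⊆ {0} ∪ ⋃ k : ℕ, ann (J - k) := by
    intro x (hx : ‖x‖ ≤ R)
    by_cases hx0 : x = 0
    · left; exact hx0
    right
    obtain ⟨i, hi1, hi2⟩ := exists_mem_Ico_zpow (norm_pos_iff.2 hx0) (one_lt_two (α := ℝ))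
    have hiJ : i < J + 1 := by
      rw [← zpow_lt_zpow_iff_right₀ (one_lt_two (α := ℝ))]
      exact (hi1.trans hx).trans_lt hJ2
    refine Set.mem_iUnion.2 ⟨(J - i).toNat, ?_⟩
    have : J - ((J - i).toNat : ℤ) = i := by omega
    rw [this]
    exact ⟨hi1, hi2⟩
  have hk : ∀ k : ℕ, ENNReal.ofReal (K * 2 ^ (J - k : ℤ)) * T =
      (2⁻¹ : ℝ≥0∞) ^ k * (ENNReal.ofReal (K * 2 ^ J) * T) := by
    intro k
    rw [← mul_assoc]
    congr 1
    have : (2⁻¹ : ℝ≥0∞) = ENNReal.ofReal (2⁻¹) := by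
      rw [ENNReal.ofReal_inv_of_pos (by norm_num)]; simp
    rw [this, ← ENNReal.ofReal_pow (by norm_num), ← ENNReal.ofReal_mul (by positivity),
      zpow_sub₀ (by norm_num), zpow_natCast]
    congr 1
    rw [inv_pow]
    ring
  calc ∫⁻ x in {x : E3 | ‖x‖ ≤ R}, g x ≤ ∫⁻ x in {0} ∪ ⋃ k : ℕ, ann (J - k), g x :=
        lintegral_mono_set hsub
    _ ≤ (∫⁻ x in {0}, g x) + ∫⁻ x in ⋃ k : ℕ, ann (J - k), g x := lintegral_union_le _ _ _
    _ = ∫⁻ x in ⋃ k : ℕ, ann (J - k), g x := by simp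
    _ ≤ ∑' k : ℕ, ∫⁻ x in ann (J - k), g x := lintegral_iUnion_le _ _
    _ ≤ ∑' k : ℕ, ENNReal.ofReal (K * 2 ^ (J - k : ℤ)) * T :=
        ENNReal.tsum_le_tsum fun k => h1 _
    _ = 2 * (ENNReal.ofReal (K * 2 ^ J) * T) := by
        simp_rw [hk]
        rw [ENNReal.tsum_mul_right, ENNReal.tsum_geometric, ENNReal.one_sub_inv_two, inv_inv]
    _ ≤ 2 * (ENNReal.ofReal (K * R) * T) := by gcongr
    _ = _ := by
        rw [ENNReal.ofReal_mul hK, ENNReal.ofReal_mul (by norm_num)]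
        simp only [ENNReal.ofReal_ofNat]
        ring

lemma normSq4_sub_le (d z : C4) (a : ℝ) :
    normSq4 d ≤ 2 * normSq4 (d + (Complex.I * (a : ℝ)) • z) + 2 * (a ^ 2 * normSq4 z) := by
  simp only [normSq4, Finset.mul_sum, ← Finset.sum_add_distrib]
  refine Finset.sum_le_sum fun k _ => ?_
  simp [Complex.normSq_apply]
  nlinarith [sq_nonneg ((d k).re - 2 * (a * (z k).im)), sq_nonneg ((d k).im + 2 * (a * (z k).re))]

/-- equivalence of magnetic and free gradients in dyadic-weighted norms. -/
theorem magnetic_gradient_equivalence :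
    ∃ C : ℝ, 0 < C ∧
      ∀ A : E3 → Fin 3 → ℝ, (∀ j, Measurable fun x => A x j) →
        linfL3 A < ⊤ →
        ∀ v : SchwartzMap E3 C4,
          (Ynorm2 (fun x =>
              ENNReal.ofReal (∑ j : Fin 3, normSq4 (partialD j (⇑v) x)))) ^ (1/2 : ℝ) ≤
            ENNReal.ofReal C * (1 + linfL3 A) *
              ((Ynorm2 (fun x =>
                  ENNReal.ofReal (∑ j : Fin 3, normSq4 (dMag A j (⇑v) x)))) ^ (1/2 : ℝ)
                + (Xnorm2 (fun x => ENNReal.ofReal (normSq4 (v x)))) ^ (1/2 : ℝ)) := by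
  obtain ⟨K, hK, h⟩ := ball_bound
  refine ⟨2 + 2 * K, by positivity, fun A hA _ v => ?_⟩
  have h1 := h A hA v
  set Y := Ynorm2 (fun x => ENNReal.ofReal (∑ j : Fin 3, normSq4 (dMag A j (⇑v) x))) with hYdef
  set X := Xnorm2 (fun x => ENNReal.ofReal (normSq4 (v x)))
  set S := Y ^ (1/2 : ℝ) + X ^ (1/2 : ℝ) with hS
  set L := linfL3 A
  have hDm := (measurable_dsq A hA v).ennreal_ofReal
  have hYS : Y ≤ S ^ 2 := by
    have h0 : (Y ^ (1/2 : ℝ)) ^ 2 ≤ S ^ 2 := by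
      gcongr
      exact le_self_add
    have h00 : (Y ^ (1/2 : ℝ)) ^ 2 = Y := by
      rw [← ENNReal.rpow_natCast, ← ENNReal.rpow_mul]; norm_num
    rwa [h00] at h0
  have hpt : ∀ x, ENNReal.ofReal (∑ j : Fin 3, normSq4 (partialD j (⇑v) x)) ≤
      2 * ENNReal.ofReal (∑ j : Fin 3, normSq4 (dMag A j (⇑v) x)) +
      2 * ENNReal.ofReal ((∑ i : Fin 3, (A x i)^2) * normSq4 (v x)) := by
    intro x
    have e2 : ∀ t : ℝ, 2 * ENNReal.ofReal t = ENNReal.ofReal (2 * t) := fun t => by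
      rw [ENNReal.ofReal_mul (by norm_num)]; simp
    have p1 : 0 ≤ ∑ j : Fin 3, normSq4 (dMag A j (⇑v) x) :=
      Finset.sum_nonneg fun _ _ => normSq4_nonneg _
    have p2 : 0 ≤ (∑ i : Fin 3, (A x i)^2) * normSq4 (v x) :=
      mul_nonneg (by positivity) (normSq4_nonneg _)
    rw [e2, e2,
      ← ENNReal.ofReal_add (by positivity) (by positivity)]
    apply ENNReal.ofReal_le_ofReal
    rw [Finset.sum_mul, Finset.mul_sum, Finset.mul_sum, ← Finset.sum_add_distrib]
    exact Finset.sum_le_sum fun j _ => normSq4_sub_le _ _ _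
  have hmain : Ynorm2 (fun x => ENNReal.ofReal (∑ j : Fin 3, normSq4 (partialD j (⇑v) x))) ≤
      (ENNReal.ofReal (2 + 2 * K) * (1 + L) * S) ^ 2 := by
    refine iSup₂_le fun R hR => ?_
    rw [ENNReal.inv_mul_le_iff (by simpa using hR) ENNReal.ofReal_ne_top]
    calc _ ≤ ∫⁻ x in {x : E3 | ‖x‖ ≤ R},
          (2 * ENNReal.ofReal (∑ j : Fin 3, normSq4 (dMag A j (⇑v) x)) +
          2 * ENNReal.ofReal ((∑ i : Fin 3, (A x i)^2) * normSq4 (v x))) := lintegral_mono hpt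
      _ = 2 * (∫⁻ x in {x : E3 | ‖x‖ ≤ R},
          ENNReal.ofReal (∑ j : Fin 3, normSq4 (dMag A j (⇑v) x))) +
          2 * ∫⁻ x in {x : E3 | ‖x‖ ≤ R},
            ENNReal.ofReal ((∑ i : Fin 3, (A x i)^2) * normSq4 (v x)) := by
          rw [lintegral_add_left (hDm.const_mul 2), lintegral_const_mul _ hDm,
            lintegral_const_mul' _ _ (by simp)]
      _ ≤ 2 * (ENNReal.ofReal R * S ^ 2) +
          2 * (ENNReal.ofReal R * (ENNReal.ofReal K * (L * S) ^ 2)) := by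
          refine add_le_add (mul_le_mul' le_rfl ((ball_le_Ynorm2 _ R hR).trans
            (mul_le_mul' le_rfl hYS))) (mul_le_mul' le_rfl (h1 R hR))
      _ = ENNReal.ofReal R * ((2 * 1 + 2 * ENNReal.ofReal K * L ^ 2) * S ^ 2) := by ring
      _ ≤ ENNReal.ofReal R * (((2 + 2 * ENNReal.ofReal K) ^ 2 * (1 + L) ^ 2) * S ^ 2) := by
          refine mul_le_mul' le_rfl (mul_le_mul' ?_ le_rfl)
          have b1 : (1 : ℝ≥0∞) ≤ (1 + L) ^ 2 := one_le_pow₀ le_self_add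
          have b2 : L ^ 2 ≤ (1 + L) ^ 2 := by
            gcongr
            exact le_add_self
          have b3 : 2 + 2 * ENNReal.ofReal K ≤ (2 + 2 * ENNReal.ofReal K) ^ 2 := by
            refine le_self_pow₀ ?_ two_ne_zero
            exact le_trans one_le_two le_self_add
          calc _ ≤ 2 * (1 + L) ^ 2 + 2 * ENNReal.ofReal K * (1 + L) ^ 2 := by gcongr
            _ = (2 + 2 * ENNReal.ofReal K) * (1 + L) ^ 2 := by ring
            _ ≤ _ := by gcongr
      _ = _ := by
          rw [ENNReal.ofReal_add (by norm_num) (by positivity), ENNReal.ofReal_mul (by norm_num)]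
          simp only [ENNReal.ofReal_ofNat]
          ring
  refine (ENNReal.rpow_le_rpow hmain (by norm_num)).trans (le_of_eq ?_)
  rw [← ENNReal.rpow_natCast, ← ENNReal.rpow_mul]
  norm_num
end
end

section
/- Morawetz-type divergence identity (first multiplier): let A ∈ C¹(ℝ³;ℝ³), w ∈ C^∞(ℝ³;ℂ), ψ ∈ C^∞(ℝ³;ℝ), c ∈ C¹(ℝ³;ℂ). Define [Δ_A,ψ]w := (Δψ) w + 2 Σ_j (∂_jψ)(∂_j^A w) and Q_j := (∂_j^A w) conj([Δ_A,ψ]w) − (1/2)(∂_j Δψ)|w|² − (∂_jψ)( c|w|² + |∂^A w|² ). Then at every point of ℝ³: Re Σ_j ∂_j Q_j = Re[ (Δ_A w − c w) conj([Δ_A,ψ]w) ] − (1/2)(Δ²ψ)|w|² + 2 Σ_{j,k} (∂_j^A w)(∂_j∂_kψ) conj(∂_k^A w) − Re( Σ_j (∂_jψ)(∂_j conj(c)) ) |w|² + 2 Im( conj(w) Σ_{j,k} B_{jk} (∂_j^A w)(∂_kψ) ) − 2 (Im c) Im( Σ_j w (∂_jψ) conj(∂_j^A w) ). -/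
open MeasureTheory Metric Complex
open scoped ENNReal

noncomputable section

/-- partial derivative of a real-valued function -/
def dR (f : E3 → ℝ) (j : Fin 3) (x : E3) : ℝ := fderiv ℝ f x (e3 j)

/-- partial derivative of a complex-valued function -/
def dC (f : E3 → ℂ) (j : Fin 3) (x : E3) : ℂ := fderiv ℝ f x (e3 j)

/-- Laplacian of a real-valued function -/
def lapR (f : E3 → ℝ) (x : E3) : ℝ := ∑ j : Fin 3, fderiv ℝ (fun y => dR f j y) x (e3 j)

/-- Hessian entries of a real-valued function -/
def hess (f : E3 → ℝ) (j k : Fin 3) (x : E3) : ℝ := fderiv ℝ (fun y => dR f k y) x (e3 j)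

/-- the magnetic derivative ∂ⱼᴬ = ∂ⱼ + iAⱼ on scalar functions -/
def dMagS (A : E3 → Fin 3 → ℝ) (j : Fin 3) (w : E3 → ℂ) : E3 → ℂ :=
  fun x => dC w j x + Complex.I * (A x j : ℝ) * w x

/-- the magnetic Laplacian Δ_A = Σⱼ (∂ⱼ + iAⱼ)² on scalar functions -/
def lapMagS (A : E3 → Fin 3 → ℝ) (w : E3 → ℂ) (x : E3) : ℂ :=
  ∑ j : Fin 3, dMagS A j (dMagS A j w) x

/-- entries of the magnetic field B of A -/
def Bfield (A : E3 → Fin 3 → ℝ) (j k : Fin 3) (x : E3) : ℝ :=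
  fderiv ℝ (fun y => A y k) x (e3 j) - fderiv ℝ (fun y => A y j) x (e3 k)

/-- the commutator [Δ_A, ψ]w = (Δψ)w + 2Σⱼ(∂ⱼψ)(∂ⱼᴬw) -/
def commMag (A : E3 → Fin 3 → ℝ) (ψ : E3 → ℝ) (w : E3 → ℂ) (x : E3) : ℂ :=
  (lapR ψ x : ℝ) * w x + 2 * ∑ j : Fin 3, (dR ψ j x : ℝ) * dMagS A j w x

/-- `f` is differentiable at `x` and its `j`-th partial derivative is `v`. -/
def HasPart (f : E3 → ℂ) (j : Fin 3) (x : E3) (v : ℂ) : Prop :=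
  DifferentiableAt ℝ f x ∧ fderiv ℝ f x (e3 j) = v

lemma HasPart.add {f g : E3 → ℂ} {j x a b} (hf : HasPart f j x a) (hg : HasPart g j x b) :
    HasPart (fun y => f y + g y) j x (a + b) := by
  refine ⟨hf.1.add hg.1, ?_⟩
  rw [fderiv_fun_add hf.1 hg.1, ← hf.2, ← hg.2]; rfl

lemma HasPart.sub {f g : E3 → ℂ} {j x a b} (hf : HasPart f j x a) (hg : HasPart g j x b) :
    HasPart (fun y => f y - g y) j x (a - b) := by
  refine ⟨hf.1.sub hg.1, ?_⟩
  rw [fderiv_fun_sub hf.1 hg.1, ← hf.2, ← hg.2]; rfl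

lemma HasPart.mul {f g : E3 → ℂ} {j x a b} (hf : HasPart f j x a) (hg : HasPart g j x b) :
    HasPart (fun y => f y * g y) j x (a * g x + f x * b) := by
  refine ⟨hf.1.mul hg.1, ?_⟩
  rw [fderiv_fun_mul hf.1 hg.1, ← hf.2, ← hg.2]
  simp [mul_comm, add_comm]

lemma HasPart.const (z : ℂ) (j x) : HasPart (fun _ => z) j x 0 := by
  refine ⟨differentiableAt_const z, ?_⟩
  simp

lemma HasPart.conj {f : E3 → ℂ} {j x a} (hf : HasPart f j x a) :
    HasPart (fun y => (starRingEnd ℂ) (f y)) j x ((starRingEnd ℂ) a) := by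
  have h := (Complex.conjCLE.toContinuousLinearMap.hasFDerivAt (x := f x)).comp x hf.1.hasFDerivAt
  refine ⟨h.differentiableAt, ?_⟩
  rw [← hf.2]
  have h2 := h.fderiv
  have h3 := congrArg (fun T => T (e3 j)) h2
  exact h3

lemma HasPart.ofReal {f : E3 → ℝ} (j : Fin 3) {x : E3} (hf : DifferentiableAt ℝ f x) :
    HasPart (fun y => ((f y : ℝ) : ℂ)) j x ((fderiv ℝ f x (e3 j) : ℝ) : ℂ) := by
  have h := (Complex.ofRealCLM.hasFDerivAt (x := f x)).comp x hf.hasFDerivAt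
  refine ⟨h.differentiableAt, ?_⟩
  exact congrArg (fun T => T (e3 j)) h.fderiv

lemma HasPart.sum3 {f : Fin 3 → E3 → ℂ} {j x} {a : Fin 3 → ℂ} (hf : ∀ k, HasPart (f k) j x (a k)) :
    HasPart (fun y => ∑ k, f k y) j x (∑ k, a k) := by
  simp only [Fin.sum_univ_three]
  exact ((hf 0).add (hf 1)).add (hf 2)

lemma HasPart.normSq {f : E3 → ℂ} {j x a} (hf : HasPart f j x a) :
    HasPart (fun y => ((Complex.normSq (f y) : ℝ) : ℂ)) j x
      (a * (starRingEnd ℂ) (f x) + f x * (starRingEnd ℂ) a) := by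
  simp only [← Complex.mul_conj]
  exact hf.mul hf.conj

lemma contDiff_partial {F : Type*} [NormedAddCommGroup F] [NormedSpace ℝ F] {f : E3 → F}
    (hf : ContDiff ℝ (⊤ : ℕ∞) f) (v : E3) :
    ContDiff ℝ (⊤ : ℕ∞) (fun y => fderiv ℝ f y v) := by
  have h : ContDiff ℝ (⊤ : ℕ∞) (fderiv ℝ f) := hf.fderiv_right (by simp)
  exact h.clm_apply contDiff_const

lemma partial_symm {F : Type*} [NormedAddCommGroup F] [NormedSpace ℝ F] {f : E3 → F}
    (hf : ContDiff ℝ (⊤ : ℕ∞) f) (u v x : E3) :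
    fderiv ℝ (fun y => fderiv ℝ f y u) x v = fderiv ℝ (fun y => fderiv ℝ f y v) x u := by
  have h : ContDiff ℝ (⊤ : ℕ∞) (fderiv ℝ f) := hf.fderiv_right (by simp)
  have hd : DifferentiableAt ℝ (fderiv ℝ f) x := h.differentiable (by simp) x
  have hs : IsSymmSndFDerivAt ℝ f x := hf.contDiffAt.isSymmSndFDerivAt (by
    simp only [minSmoothness_of_isRCLikeNormedField]
    exact WithTop.coe_le_coe.2 (le_top : (2 : ℕ∞) ≤ ⊤))
  rw [fderiv_clm_apply hd (differentiableAt_const u), fderiv_clm_apply hd (differentiableAt_const v)]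
  simpa using hs v u

/-- The pointwise algebraic identity. -/
lemma morawetz_algebra (w c : ℂ) (u dc : Fin 3 → ℂ) (U : Fin 3 → Fin 3 → ℂ) (a p dL : Fin 3 → ℝ)
    (B H : Fin 3 → Fin 3 → ℝ) (L LL : ℝ) (ddL : Fin 3 → ℝ)
    (hB : ∀ j, B j j = 0) (hB' : ∀ j k, B j k = - B k j)
    (hH : ∀ j k, H j k = H k j) (hL : L = ∑ j, H j j) (hLL : LL = ∑ j, ddL j)
    (hU : ∀ j k, U j k = U k j - I * a j * u k + I * a k * u j + I * B j k * w) :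
    ((∑ j : Fin 3,
      (U j j * (starRingEnd ℂ) (L * w + 2 * ∑ k, (p k : ℂ) * u k)
        + u j * (starRingEnd ℂ) (((dL j : ℂ) * w + L * (u j - I * a j * w))
            + (0 * (∑ k, (p k : ℂ) * u k) + 2 * ∑ k, ((H j k : ℂ) * u k + p k * U j k)))
        - (((0 * (dL j : ℂ) + (1/2 : ℂ) * ddL j) * (Complex.normSq w : ℝ)
            + (1/2 : ℂ) * dL j * ((u j - I * a j * w) * (starRingEnd ℂ) w
                + w * (starRingEnd ℂ) (u j - I * a j * w))))
        - ((H j j : ℂ) * (c * (Complex.normSq w : ℝ) + ∑ k, ((Complex.normSq (u k) : ℝ) : ℂ))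
           + p j * ((dc j * (Complex.normSq w : ℝ)
              + c * ((u j - I * a j * w) * (starRingEnd ℂ) w
                + w * (starRingEnd ℂ) (u j - I * a j * w)))
              + ∑ k, (U j k * (starRingEnd ℂ) (u k) + u k * (starRingEnd ℂ) (U j k)))))).re : ℂ)
    = (((((∑ j, (U j j + I * a j * u j)) - c * w) *
          (starRingEnd ℂ) (L * w + 2 * ∑ k, (p k : ℂ) * u k)).re : ℝ) : ℂ)
          - (1/2 : ℂ) * LL * (Complex.normSq w : ℝ)
          + 2 * ∑ j : Fin 3, ∑ k : Fin 3, u j * (H j k : ℝ) * (starRingEnd ℂ) (u k)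
          - (((∑ j : Fin 3, (p j : ℝ) * (starRingEnd ℂ) (dc j)).re : ℝ) : ℂ)
              * (Complex.normSq w : ℝ)
          + 2 * ((((starRingEnd ℂ) w * ∑ j : Fin 3, ∑ k : Fin 3,
              (B j k : ℝ) * u j * (p k : ℝ)).im : ℝ) : ℂ)
          - 2 * (c.im : ℝ) *
              (((∑ j : Fin 3, w * (p j : ℝ) * (starRingEnd ℂ) (u j)).im : ℝ) : ℂ) := by
  have h10 := hU 1 0
  have h20 := hU 2 0
  have h21 := hU 2 1
  have g10 := hH 1 0
  have g20 := hH 2 0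
  have g21 := hH 2 1
  have b10 := hB' 1 0
  have b20 := hB' 2 0
  have b21 := hB' 2 1
  simp only [Fin.sum_univ_three] at *
  rw [h10, h20, h21, g10, g20, g21, b10, b20, b21, hB 0, hB 1, hB 2, hL, hLL]
  apply Complex.ext
  · simp [Complex.normSq_apply]
    ring
  · simp [Complex.normSq_apply]
    ring

/-- Morawetz-type divergence identity for the first multiplier. -/
theorem morawetz_identity_first_multiplier
    (A : E3 → Fin 3 → ℝ) (hA : ∀ j, ContDiff ℝ 1 (fun x => A x j))
    (w : E3 → ℂ) (hw : ContDiff ℝ (⊤ : ℕ∞) w)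
    (ψ : E3 → ℝ) (hψ : ContDiff ℝ (⊤ : ℕ∞) ψ)
    (c : E3 → ℂ) (hc : ContDiff ℝ 1 c)
    (Q : Fin 3 → E3 → ℂ)
    (hQ : ∀ j x, Q j x =
      dMagS A j w x * (starRingEnd ℂ) (commMag A ψ w x)
        - (1/2 : ℂ) * (dR (fun y => lapR ψ y) j x : ℝ) * (Complex.normSq (w x) : ℝ)
        - (dR ψ j x : ℝ) * (c x * (Complex.normSq (w x) : ℝ)
            + ((∑ k : Fin 3, Complex.normSq (dMagS A k w x) : ℝ) : ℂ))) :
    ∀ x : E3,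
      (((∑ j : Fin 3, fderiv ℝ (Q j) x (e3 j)).re : ℝ) : ℂ)
        = ((((lapMagS A w x - c x * w x) * (starRingEnd ℂ) (commMag A ψ w x)).re : ℝ) : ℂ)
          - (1/2 : ℂ) * (lapR (fun y => lapR ψ y) x : ℝ) * (Complex.normSq (w x) : ℝ)
          + 2 * ∑ j : Fin 3, ∑ k : Fin 3,
              dMagS A j w x * (hess ψ j k x : ℝ) * (starRingEnd ℂ) (dMagS A k w x)
          - (((∑ j : Fin 3, (dR ψ j x : ℝ) * (starRingEnd ℂ) (dC c j x)).re : ℝ) : ℂ)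
              * (Complex.normSq (w x) : ℝ)
          + 2 * ((((starRingEnd ℂ) (w x) * ∑ j : Fin 3, ∑ k : Fin 3,
              (Bfield A j k x : ℝ) * dMagS A j w x * (dR ψ k x : ℝ)).im : ℝ) : ℂ)
          - 2 * ((c x).im : ℝ) *
              (((∑ j : Fin 3, w x * (dR ψ j x : ℝ) * (starRingEnd ℂ) (dMagS A j w x)).im : ℝ) : ℂ) := by
  intro x
  have hwd : ∀ y, DifferentiableAt ℝ w y := fun y => hw.differentiable (by simp) y
  have hAd : ∀ j y, DifferentiableAt ℝ (fun x => A x j) y :=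
    fun j y => (hA j).differentiable (by simp) y
  have hp : ∀ k, ContDiff ℝ (⊤ : ℕ∞) (fun y => dR ψ k y) := fun k => contDiff_partial hψ (e3 k)
  have hLs : ContDiff ℝ (⊤ : ℕ∞) (fun y => lapR ψ y) := by
    unfold lapR
    exact ContDiff.sum fun k _ => contDiff_partial (hp k) (e3 k)
  have hdL : ∀ k, ContDiff ℝ (⊤ : ℕ∞) (fun y => dR (fun y => lapR ψ y) k y) :=
    fun k => contDiff_partial hLs (e3 k)
  have hdw : ∀ k, ContDiff ℝ (⊤ : ℕ∞) (fun y => dC w k y) := fun k => contDiff_partial hw (e3 k)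
  have Pw : ∀ j, HasPart w j x (dMagS A j w x - I * (A x j : ℝ) * w x) :=
    fun j => ⟨hwd x, by simp [dMagS, dC]⟩
  have Pu0 : ∀ j k, HasPart (dMagS A k w) j x
      (fderiv ℝ (fun y => dC w k y) x (e3 j) +
        ((0 * (A x k : ℂ) + I * (fderiv ℝ (fun y => A y k) x (e3 j) : ℝ)) * w x
          + I * (A x k : ℝ) * (dMagS A j w x - I * (A x j : ℝ) * w x))) := fun j k =>
    HasPart.add ⟨(hdw k).differentiable (by simp) x, rfl⟩
      (((HasPart.const I j x).mul (HasPart.ofReal j (hAd k x))).mul (Pw j))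
  have Pu : ∀ j k, HasPart (dMagS A k w) j x (dC (dMagS A k w) j x) :=
    fun j k => ⟨(Pu0 j k).1, rfl⟩
  have Pp : ∀ j k, HasPart (fun y => ((dR ψ k y : ℝ) : ℂ)) j x (hess ψ j k x : ℝ) :=
    fun j k => HasPart.ofReal j ((hp k).differentiable (by simp) x)
  have PL : ∀ j, HasPart (fun y => ((lapR ψ y : ℝ) : ℂ)) j x
      (dR (fun y => lapR ψ y) j x : ℝ) :=
    fun j => HasPart.ofReal j (hLs.differentiable (by simp) x)
  have PdL : ∀ j, HasPart (fun y => ((dR (fun y => lapR ψ y) j y : ℝ) : ℂ)) j x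
      (fderiv ℝ (fun y => dR (fun y => lapR ψ y) j y) x (e3 j) : ℝ) :=
    fun j => HasPart.ofReal j ((hdL j).differentiable (by simp) x)
  have Pc : ∀ j, HasPart c j x (dC c j x) :=
    fun j => ⟨hc.differentiable (by simp) x, rfl⟩
  have Pcomm : ∀ j, HasPart (commMag A ψ w) j x _ := fun j =>
    ((PL j).mul (Pw j)).add ((HasPart.const 2 j x).mul
      (HasPart.sum3 fun k => (Pp j k).mul (Pu j k)))
  have PQ : ∀ j, HasPart (Q j) j x _ := fun j => by
    have hQj : Q j = _ := funext (hQ j)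
    rw [hQj]
    simp only [Complex.ofReal_sum]
    exact (((Pu j j).mul (Pcomm j).conj).sub
      (((HasPart.const (1/2) j x).mul (PdL j)).mul (Pw j).normSq)).sub
      ((Pp j j).mul (((Pc j).mul (Pw j).normSq).add
        (HasPart.sum3 fun k => (Pu j k).normSq)))
  have hsum := Finset.sum_congr (rfl : (Finset.univ : Finset (Fin 3)) = Finset.univ)
    (fun j _ => (PQ j).2)
  rw [hsum]
  have key := morawetz_algebra (w x) (c x) (fun j => dMagS A j w x) (fun j => dC c j x)
    (fun j k => dC (dMagS A k w) j x) (fun j => A x j) (fun j => dR ψ j x)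
    (fun j => dR (fun y => lapR ψ y) j x) (fun j k => Bfield A j k x) (fun j k => hess ψ j k x)
    (lapR ψ x) (lapR (fun y => lapR ψ y) x)
    (fun j => fderiv ℝ (fun y => dR (fun y => lapR ψ y) j y) x (e3 j))
    (fun j => by simp [Bfield]) (fun j k => by simp [Bfield])
    (fun j k => partial_symm hψ (e3 k) (e3 j) x) rfl rfl
    (fun j k => by
      have h1 : dC (dMagS A k w) j x = _ := (Pu0 j k).2
      have h2 : dC (dMagS A j w) k x = _ := (Pu0 k j).2
      have h3 : fderiv ℝ (fun y => dC w k y) x (e3 j) = fderiv ℝ (fun y => dC w j y) x (e3 k) :=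
        partial_symm hw (e3 k) (e3 j) x
      rw [h1, h2, h3]
      simp only [Bfield]
      push_cast
      ring)
  exact key
end
end

section
/- Generalized Hardy inequality with radial derivative: for every σ > −1 and every φ ∈ C_c^∞(ℝ³;ℂ), one has ( ∫_{ℝ³} |x|^{2σ−1} |φ(x)|² dx )^{1/2} ≤ (2/(σ+1)) ( ∫_{ℝ³} |x|^{2σ+1} |(x/|x|)·∇φ(x)|² dx )^{1/2}. -/
open MeasureTheory Complex
open scoped ENNReal

noncomputable section

/-- the radial derivative (x/|x|)·∇φ -/
def radialDeriv (φ : E3 → ℂ) (x : E3) : ℂ :=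
  ∑ j : Fin 3, ((x j / ‖x‖ : ℝ) : ℂ) * fderiv ℝ φ x (e3 j)

/-- integral of the weight -/
lemma weight_int (σ : ℝ) (hσ : -1 < σ) :
    ∫⁻ t in Set.Ioi (1:ℝ), ENNReal.ofReal (t ^ (-(σ+2))) = ENNReal.ofReal (1 / (σ+1)) := by
  rw [← ofReal_integral_eq_lintegral_ofReal]
  · rw [integral_Ioi_rpow_of_lt (by linarith) one_pos, Real.one_rpow]
    congr 1
    rw [show -(σ+2)+1 = -(σ+1) by ring, neg_div_neg_eq]
  · exact integrableOn_Ioi_rpow_of_lt (by linarith) one_pos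
  · filter_upwards [ae_restrict_mem measurableSet_Ioi] with t ht
    exact Real.rpow_nonneg (by linarith [Set.mem_Ioi.1 ht]) _

lemma radial_eq (φ : E3 → ℂ) (x : E3) (t : ℝ) (ht : 0 < t) (hx : x ≠ 0) :
    fderiv ℝ φ (t • x) x = (‖x‖ : ℂ) * radialDeriv φ (t • x) := by
  have hn : ‖x‖ ≠ 0 := norm_ne_zero_iff.2 hx
  have hxs : x = ∑ j : Fin 3, x j • e3 j := by
    ext i
    fin_cases i <;> simp [Fin.sum_univ_three, e3]
  have h1 : fderiv ℝ φ (t • x) x = ∑ j : Fin 3, (x j : ℂ) * fderiv ℝ φ (t • x) (e3 j) := by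
    have h0 := congrArg (fderiv ℝ φ (t • x)) hxs
    simpa only [map_sum, map_smul, Complex.real_smul] using h0
  rw [h1, radialDeriv, Finset.mul_sum]
  refine Finset.sum_congr rfl fun j _ => ?_
  rw [← mul_assoc, ← Complex.ofReal_mul]
  congr 2
  rw [norm_smul, Real.norm_of_nonneg ht.le]
  simp only [PiLp.smul_apply, smul_eq_mul]
  field_simp

lemma radial_meas (φ : E3 → ℂ) (hsm : ContDiff ℝ (⊤ : ℕ∞) φ) : Measurable (radialDeriv φ) := by
  have h : ∀ j, Measurable fun x => fderiv ℝ φ x (e3 j) := fun j =>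
    ((hsm.continuous_fderiv (by simp)).clm_apply continuous_const).measurable
  unfold radialDeriv
  refine Finset.measurable_sum _ fun j _ => ?_
  refine Measurable.mul ?_ (h j)
  refine Complex.measurable_ofReal.comp ?_
  refine Measurable.div ?_ measurable_norm
  fun_prop

lemma phi_le (φ : E3 → ℂ) (hsm : ContDiff ℝ (⊤ : ℕ∞) φ) (hsupp : HasCompactSupport φ)
    (x : E3) (hx : x ≠ 0) :
    ‖φ x‖ₑ ≤ ∫⁻ t in Set.Ioi (1:ℝ), ENNReal.ofReal (‖x‖ * ‖radialDeriv φ (t • x)‖) := by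
  have hc : HasCompactSupport fun t : ℝ => φ (t • x) :=
    hsupp.comp_isClosedEmbedding (isClosedEmbedding_smul_left hx)
  have hd : ContDiff ℝ 1 fun t : ℝ => φ (t • x) :=
    (hsm.of_le (by simp)).comp (contDiff_id.smul contDiff_const)
  have h := hc.integral_Ioi_deriv_eq hd 1
  simp only [one_smul] at h
  rw [← enorm_neg, ← h]
  refine (enorm_integral_le_lintegral_enorm _).trans (le_of_eq ?_)
  refine setLIntegral_congr_fun measurableSet_Ioi fun t ht => ?_
  have ht0 : 0 < t := lt_trans one_pos ht
  have hder : HasDerivAt (fun t : ℝ => φ (t • x)) (fderiv ℝ φ (t • x) x) t := by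
    have h2 : HasDerivAt (fun t : ℝ => t • x) x t := by
      simpa using (hasDerivAt_id t).smul_const x
    exact ((hsm.differentiable (by simp)) (t • x)).hasFDerivAt.comp_hasDerivAt t h2
  rw [hder.deriv, radial_eq φ x t ht0 hx, ← ofReal_norm, norm_mul, Complex.norm_real,
    norm_norm]

lemma pointwise_bound (σ : ℝ) (hσ : -1 < σ)
    (φ : E3 → ℂ) (hsm : ContDiff ℝ (⊤ : ℕ∞) φ) (hsupp : HasCompactSupport φ)
    (x : E3) (hx : x ≠ 0) :
    ENNReal.ofReal (‖x‖ ^ (2*σ - 1) * Complex.normSq (φ x)) ≤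
      ENNReal.ofReal (1 / (σ+1)) * ∫⁻ t in Set.Ioi (1:ℝ), ENNReal.ofReal (t ^ (1-σ)) *
        ENNReal.ofReal (‖t • x‖ ^ (2*σ + 1) * Complex.normSq (radialDeriv φ (t • x))) := by
  have hn : 0 < ‖x‖ := norm_pos_iff.2 hx
  have hm := radial_meas φ hsm
  have h1 := phi_le φ hsm hsupp x hx
  have h2 := ENNReal.lintegral_mul_le_Lp_mul_Lq (volume.restrict (Set.Ioi (1:ℝ)))
    (p := 2) (q := 2) ⟨by norm_num, by norm_num, by norm_num⟩
    (f := fun t => ENNReal.ofReal (t ^ (-(σ+2)/2)))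
    (g := fun t => ENNReal.ofReal (t ^ ((σ+2)/2) * (‖x‖ * ‖radialDeriv φ (t • x)‖)))
    (by fun_prop) (by fun_prop)
  have h3 : ∫⁻ t in Set.Ioi (1:ℝ), ENNReal.ofReal (‖x‖ * ‖radialDeriv φ (t • x)‖) =
    ∫⁻ t in Set.Ioi (1:ℝ), ((fun t => ENNReal.ofReal (t ^ (-(σ+2)/2))) *
      (fun t => ENNReal.ofReal (t ^ ((σ+2)/2) * (‖x‖ * ‖radialDeriv φ (t • x)‖)))) t := by
    refine setLIntegral_congr_fun measurableSet_Ioi fun t ht => ?_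
    have ht0 : 0 < t := lt_trans one_pos ht
    simp only [Pi.mul_apply]
    rw [← ENNReal.ofReal_mul (by positivity), ← mul_assoc, ← Real.rpow_add ht0,
      show -(σ+2)/2 + (σ+2)/2 = 0 by ring, Real.rpow_zero, one_mul]
  have h4 : ∫⁻ t in Set.Ioi (1:ℝ), ENNReal.ofReal (t ^ (-(σ+2)/2)) ^ (2:ℝ) =
      ENNReal.ofReal (1 / (σ+1)) := by
    rw [← weight_int σ hσ]
    refine setLIntegral_congr_fun measurableSet_Ioi fun t ht => ?_
    have ht0 : 0 < t := lt_trans one_pos ht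
    rw [ENNReal.ofReal_rpow_of_nonneg (by positivity) (by norm_num), ← Real.rpow_mul ht0.le]
    congr 2; ring
  rw [h3] at h1
  have h5 := ENNReal.rpow_le_rpow (h1.trans h2) (z := 2) (by norm_num)
  rw [ENNReal.mul_rpow_of_nonneg _ _ (by norm_num), ← ENNReal.rpow_mul, ← ENNReal.rpow_mul, h4,
    show (1/2:ℝ)*2 = 1 by norm_num, ENNReal.rpow_one, ENNReal.rpow_one] at h5
  have h6 : ENNReal.ofReal (‖x‖ ^ (2*σ - 1) * Complex.normSq (φ x)) =
      ENNReal.ofReal (‖x‖ ^ (2*σ - 1)) * ‖φ x‖ₑ ^ (2:ℝ) := by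
    rw [ENNReal.ofReal_mul (by positivity), Complex.normSq_eq_norm_sq, ← ofReal_norm,
      ENNReal.ofReal_rpow_of_nonneg (by positivity) (by norm_num), Real.rpow_two]
  rw [h6]
  refine (mul_le_mul_right h5 _).trans (le_of_eq ?_)
  rw [mul_left_comm]
  congr 1
  rw [← lintegral_const_mul _ (by fun_prop)]
  refine setLIntegral_congr_fun measurableSet_Ioi fun t ht => ?_
  have ht0 : 0 < t := lt_trans one_pos ht
  rw [ENNReal.ofReal_rpow_of_nonneg (by positivity) (by norm_num),
    ← ENNReal.ofReal_mul (by positivity), ← ENNReal.ofReal_mul (by positivity)]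
  congr 1
  rw [norm_smul, Real.norm_of_nonneg ht0.le, Complex.normSq_eq_norm_sq,
    Real.mul_rpow ht0.le hn.le, Real.rpow_two, mul_pow, mul_pow, ← Real.rpow_mul_natCast ht0.le]
  rw [show 2*σ+1 = (2*σ-1) + (2:ℕ) by push_cast; ring, Real.rpow_add_natCast hn.ne',
    show (σ+2)/2*(2:ℕ) = (1-σ) + ((2*σ-1) + (2:ℕ)) by push_cast; ring, Real.rpow_add ht0]
  ring

lemma scaling (F : E3 → ℝ≥0∞) (hF : Measurable F) (t : ℝ) (ht : 0 < t) :
    ∫⁻ x, F (t • x) = ENNReal.ofReal (t ^ (-3 : ℝ)) * ∫⁻ x, F x := by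
  have h := lintegral_map (μ := (volume : Measure E3)) hF (measurable_const_smul t)
  rw [← h, Measure.map_addHaar_smul volume ht.ne', lintegral_smul_measure]
  simp only [finrank_euclideanSpace, Fintype.card_fin, smul_eq_mul]
  congr 2
  rw [abs_of_pos (by positivity), Real.rpow_neg ht.le]
  norm_cast

/-- generalized Hardy inequality with the radial derivative. -/
theorem generalized_hardy_inequality (σ : ℝ) (hσ : -1 < σ)
    (φ : E3 → ℂ) (hsm : ContDiff ℝ (⊤ : ℕ∞) φ) (hsupp : HasCompactSupport φ) :
    (∫⁻ x : E3, ENNReal.ofReal (‖x‖ ^ (2*σ - 1) * Complex.normSq (φ x))) ^ (1/2 : ℝ) ≤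
      ENNReal.ofReal (2 / (σ + 1)) *
        (∫⁻ x : E3, ENNReal.ofReal (‖x‖ ^ (2*σ + 1) *
          Complex.normSq (radialDeriv φ x))) ^ (1/2 : ℝ) := by
  have hs : 0 < σ + 1 := by linarith
  have hm := radial_meas φ hsm
  set F : E3 → ℝ≥0∞ := fun x => ENNReal.ofReal (‖x‖ ^ (2*σ + 1) *
          Complex.normSq (radialDeriv φ x)) with hFdef
  have hF : Measurable F := by
    simp only [hFdef, Complex.normSq_eq_norm_sq]
    fun_prop
  have key : ∫⁻ x : E3, ENNReal.ofReal (‖x‖ ^ (2*σ - 1) * Complex.normSq (φ x)) ≤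
      ENNReal.ofReal (1 / (σ+1)) ^ (2:ℝ) * ∫⁻ x, F x := by
    calc _ ≤ ∫⁻ x : E3, ENNReal.ofReal (1 / (σ+1)) *
            ∫⁻ t in Set.Ioi (1:ℝ), ENNReal.ofReal (t ^ (1-σ)) * F (t • x) := by
          refine lintegral_mono_ae ?_
          filter_upwards [compl_mem_ae_iff.2 (measure_singleton (0:E3))] with x hx
          exact pointwise_bound σ hσ φ hsm hsupp x hx
      _ = ENNReal.ofReal (1 / (σ+1)) * ∫⁻ t in Set.Ioi (1:ℝ), ∫⁻ x : E3,
            ENNReal.ofReal (t ^ (1-σ)) * F (t • x) := by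
          rw [lintegral_const_mul' _ _ ENNReal.ofReal_ne_top, lintegral_lintegral_swap]
          fun_prop
      _ = ENNReal.ofReal (1 / (σ+1)) * ∫⁻ t in Set.Ioi (1:ℝ),
            ENNReal.ofReal (t ^ (-(σ+2))) * ∫⁻ x, F x := by
          congr 1
          refine setLIntegral_congr_fun measurableSet_Ioi fun t ht => ?_
          have ht0 : 0 < t := lt_trans one_pos ht
          rw [lintegral_const_mul' _ _ ENNReal.ofReal_ne_top, scaling F hF t ht0, ← mul_assoc,
            ← ENNReal.ofReal_mul (by positivity), ← Real.rpow_add ht0]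
          congr 3; ring
      _ = _ := by
          rw [lintegral_mul_const _ (by fun_prop), weight_int σ hσ, ENNReal.rpow_two, sq, mul_assoc]
  refine (ENNReal.rpow_le_rpow key (by norm_num)).trans ?_
  rw [ENNReal.mul_rpow_of_nonneg _ _ (by norm_num), ← ENNReal.rpow_mul,
    show (2:ℝ)*(1/2) = 1 by norm_num, ENNReal.rpow_one]
  gcongr
  norm_num
end
end

section
/- Stein–Weiss estimate for the Newtonian potential: for every s with 1/2 < s < 3/2 there is a constant C_s such that for every measurable f : ℝ³ → [0,∞], the function u(x) := ∫_{ℝ³} f(y)/|x−y| dy satisfies ( ∫_{ℝ³} |x|^{2(s−2)} u(x)² dx )^{1/2} ≤ C_s ( ∫_{ℝ³} |x|^{2s} f(x)² dx )^{1/2} (both sides possibly infinite). -/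
open MeasureTheory
open scoped ENNReal

noncomputable section

lemma sw_radial (g : ℝ → ℝ) (hg : ∀ t, 0 ≤ t → 0 ≤ g t)
    (hi : IntegrableOn (fun t : ℝ => t ^ 2 * g t) (Set.Ioi 0)) :
    ∫⁻ y : E3, ENNReal.ofReal (g ‖y‖) =
      ENNReal.ofReal ((3 * (volume : Measure E3).real (Metric.ball 0 1)) *
        ∫ t in Set.Ioi (0 : ℝ), t ^ 2 * g t) := by
  have hgint : Integrable (fun y : E3 => g ‖y‖) := by
    rw [integrable_fun_norm_addHaar (volume : Measure E3)]
    simpa using hi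
  rw [← ofReal_integral_eq_lintegral_ofReal hgint
    (Filter.Eventually.of_forall fun y => hg _ (norm_nonneg y)),
    integral_fun_norm_addHaar]
  simp [mul_assoc]

lemma sw_near (p : ℝ) (hp : p < 3) : ∃ C : ℝ, 0 ≤ C ∧ ∀ ρ : ℝ, 0 < ρ →
    ∫⁻ y : E3, ENNReal.ofReal (if ‖y‖ ≤ ρ then ‖y‖ ^ (-p) else 0) ≤
      ENNReal.ofReal (C * ρ ^ (3 - p)) := by
  refine ⟨(3 * (volume : Measure E3).real (Metric.ball 0 1)) * (1 / (3 - p)),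
    by have : 0 < 3 - p := by linarith
       positivity, fun ρ hρ => ?_⟩
  have hE : Set.EqOn (fun t : ℝ => t ^ 2 * (if t ≤ ρ then t ^ (-p) else 0))
      ((Set.Ioc 0 ρ).indicator (fun t : ℝ => t ^ (2 - p))) (Set.Ioi 0) := by
    intro t ht
    have ht' : 0 < t := ht
    by_cases h : t ≤ ρ
    · simp only [h, if_true, Set.indicator, Set.mem_Ioc, ht', and_self]
      rw [← Real.rpow_natCast, ← Real.rpow_add ht']
      congr 1
    · simp [h]
  have hio : IntegrableOn (fun t : ℝ => t ^ (2 - p)) (Set.Ioc 0 ρ) := by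
    have := intervalIntegral.intervalIntegrable_rpow' (a := 0) (b := ρ) (r := 2 - p) (by linarith)
    rwa [intervalIntegrable_iff_integrableOn_Ioc_of_le hρ.le] at this
  have hsub : Set.Ioc 0 ρ ⊆ Set.Ioi (0:ℝ) := fun t ht => ht.1
  rw [sw_radial (fun t => if t ≤ ρ then t ^ (-p) else 0)]
  · rw [setIntegral_congr_fun measurableSet_Ioi hE,
      setIntegral_indicator measurableSet_Ioc, Set.inter_eq_right.mpr hsub,
      ← intervalIntegral.integral_of_le hρ.le, integral_rpow (Or.inl (by linarith)),
      Real.zero_rpow (by linarith)]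
    apply le_of_eq
    congr 1
    rw [show 2 - p + 1 = 3 - p by ring]
    ring
  · intro t ht
    split_ifs <;> positivity
  · rw [integrableOn_congr_fun hE measurableSet_Ioi]
    exact ((integrable_indicator_iff measurableSet_Ioc).mpr hio).integrableOn

lemma sw_far (p : ℝ) (hp : 3 < p) : ∃ C : ℝ, 0 ≤ C ∧ ∀ ρ : ℝ, 0 < ρ →
    ∫⁻ y : E3, ENNReal.ofReal (if ρ < ‖y‖ then ‖y‖ ^ (-p) else 0) ≤
      ENNReal.ofReal (C * ρ ^ (3 - p)) := by
  refine ⟨(3 * (volume : Measure E3).real (Metric.ball 0 1)) * (1 / (p - 3)),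
    by have : 0 < p - 3 := by linarith
       positivity, fun ρ hρ => ?_⟩
  have hE : Set.EqOn (fun t : ℝ => t ^ 2 * (if ρ < t then t ^ (-p) else 0))
      ((Set.Ioi ρ).indicator (fun t : ℝ => t ^ (2 - p))) (Set.Ioi 0) := by
    intro t ht
    have ht' : 0 < t := ht
    by_cases h : ρ < t
    · simp only [h, if_true, Set.indicator, Set.mem_Ioi]
      rw [← Real.rpow_natCast, ← Real.rpow_add ht']
      congr 1
    · simp [h]
  have hio : IntegrableOn (fun t : ℝ => t ^ (2 - p)) (Set.Ioi ρ) :=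
    integrableOn_Ioi_rpow_of_lt (by linarith) hρ
  have hsub : Set.Ioi ρ ⊆ Set.Ioi (0:ℝ) := fun t ht => lt_trans hρ ht
  rw [sw_radial (fun t => if ρ < t then t ^ (-p) else 0)]
  · rw [setIntegral_congr_fun measurableSet_Ioi hE,
      setIntegral_indicator measurableSet_Ioi, Set.inter_eq_right.mpr hsub,
      integral_Ioi_rpow_of_lt (by linarith) hρ]
    apply le_of_eq
    congr 1
    rw [show 2 - p + 1 = -(p - 3) by ring, show 3 - p = -(p - 3) by ring, neg_div_neg_eq]
    ring
  · intro t ht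
    split_ifs <;> positivity
  · rw [integrableOn_congr_fun hE measurableSet_Ioi]
    exact ((integrable_indicator_iff measurableSet_Ioi).mpr hio).integrableOn

lemma sw_pointwise (b r n d : ℝ) (hb : 0 < b) (hr : 0 < r) (hn : 0 ≤ n) (hd : 0 < d)
    (h1 : r ≤ n + d) (h2 : n ≤ r + d) :
    n ^ (-b) / d ≤ (2 / r) * (if n ≤ r / 2 then n ^ (-b) else 0)
      + (r / 2) ^ (-b) * (if d ≤ r / 2 then d ^ (-1 : ℝ) else 0)
      + 3 * (if r / 2 < n then n ^ (-(b + 1)) else 0) := by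
  have A : 0 ≤ (2 / r) * (if n ≤ r / 2 then n ^ (-b) else 0) := by
    split_ifs <;> positivity
  have B : 0 ≤ (r / 2) ^ (-b) * (if d ≤ r / 2 then d ^ (-1 : ℝ) else 0) := by
    split_ifs <;> positivity
  have D : 0 ≤ 3 * (if r / 2 < n then n ^ (-(b + 1)) else 0) := by
    split_ifs <;> positivity
  by_cases hA : n ≤ r / 2
  · have : n ^ (-b) / d ≤ (2 / r) * n ^ (-b) := by
      rw [div_eq_inv_mul]
      apply mul_le_mul_of_nonneg_right _ (by positivity)
      rw [inv_le_comm₀ hd (by positivity), inv_div]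
      linarith
    rw [if_pos hA] at A ⊢
    linarith
  have hA' : r / 2 < n := not_le.mp hA
  by_cases hB : d ≤ r / 2
  · have : n ^ (-b) / d ≤ (r / 2) ^ (-b) * d ^ (-1 : ℝ) := by
      rw [Real.rpow_neg_one, div_eq_mul_inv]
      apply mul_le_mul_of_nonneg_right _ (by positivity)
      exact Real.rpow_le_rpow_of_nonpos (by positivity) hA'.le (by linarith)
    rw [if_pos hB] at B ⊢
    linarith
  · have hn' : 0 < n := by linarith
    have : n ^ (-b) / d ≤ 3 * n ^ (-(b + 1)) := by
      rw [show -(b + 1) = -b + -1 by ring, Real.rpow_add hn', Real.rpow_neg_one,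
        div_eq_mul_inv, mul_left_comm]
      apply mul_le_mul_of_nonneg_left _ (by positivity)
      rw [inv_le_comm₀ hd (by positivity), mul_inv, inv_inv]
      linarith
    rw [if_pos hA'] at D ⊢
    linarith

lemma sw_key (b : ℝ) (hb2 : 2 < b) (hb3 : b < 3) : ∃ C : ℝ, 0 ≤ C ∧ ∀ x : E3, x ≠ 0 →
    ∫⁻ y : E3, ENNReal.ofReal (‖y‖ ^ (-b)) * (ENNReal.ofReal ‖x - y‖)⁻¹ ≤
      ENNReal.ofReal (C * ‖x‖ ^ (2 - b)) := by
  obtain ⟨C1, hC1, H1⟩ := sw_near b hb3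
  obtain ⟨C2, hC2, H2⟩ := sw_near 1 (by norm_num)
  obtain ⟨C3, hC3, H3⟩ := sw_far (b + 1) (by linarith)
  refine ⟨(C1 + C2 + 3 * C3) * (1 / 2) ^ (2 - b), by positivity, fun x hx => ?_⟩
  have hr : 0 < ‖x‖ := norm_pos_iff.mpr hx
  have hρ : 0 < ‖x‖ / 2 := by positivity
  set r := ‖x‖ with hrdef
  have hpt : ∀ᵐ y : E3, ENNReal.ofReal (‖y‖ ^ (-b)) * (ENNReal.ofReal ‖x - y‖)⁻¹ ≤
      ENNReal.ofReal (2 / r) * ENNReal.ofReal (if ‖y‖ ≤ r / 2 then ‖y‖ ^ (-b) else 0)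
      + ENNReal.ofReal ((r / 2) ^ (-b)) *
          ENNReal.ofReal (if ‖x - y‖ ≤ r / 2 then ‖x - y‖ ^ (-1 : ℝ) else 0)
      + ENNReal.ofReal 3 * ENNReal.ofReal (if r / 2 < ‖y‖ then ‖y‖ ^ (-(b + 1)) else 0) := by
    filter_upwards [Measure.ae_ne volume x] with y hy
    have hd : 0 < ‖x - y‖ := norm_pos_iff.mpr (sub_ne_zero.mpr (Ne.symm hy))
    rw [← ENNReal.ofReal_inv_of_pos hd, ← ENNReal.ofReal_mul (by positivity),
      ← ENNReal.ofReal_mul (by positivity), ← ENNReal.ofReal_mul (by positivity),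
      ← ENNReal.ofReal_mul (by positivity), ← ENNReal.ofReal_add, ← ENNReal.ofReal_add]
    · apply ENNReal.ofReal_le_ofReal
      rw [← div_eq_mul_inv]
      refine sw_pointwise b r _ _ (by linarith) hr (norm_nonneg _) hd ?_ ?_
      · have := norm_add_le y (x - y)
        simpa using this
      · have := norm_sub_le x (x - y)
        simpa using this
    all_goals split_ifs <;> positivity
  have hm (c : ℝ) : Measurable fun y : E3 => ‖y‖ ^ c := by fun_prop
  have m1 : Measurable fun y : E3 => ENNReal.ofReal (if ‖y‖ ≤ r / 2 then ‖y‖ ^ (-b) else 0) :=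
    (Measurable.ite (measurableSet_le measurable_norm measurable_const) (hm _)
      measurable_const).ennreal_ofReal
  have m2 : Measurable fun y : E3 => ENNReal.ofReal (if ‖y‖ ≤ r / 2 then ‖y‖ ^ (-1:ℝ) else 0) :=
    (Measurable.ite (measurableSet_le measurable_norm measurable_const) (hm _)
      measurable_const).ennreal_ofReal
  have m2' : Measurable fun y : E3 =>
      ENNReal.ofReal (if ‖x - y‖ ≤ r / 2 then ‖x - y‖ ^ (-1:ℝ) else 0) :=
    m2.comp (measurable_const.sub measurable_id)
  have m3 : Measurable fun y : E3 =>
      ENNReal.ofReal (if r / 2 < ‖y‖ then ‖y‖ ^ (-(b+1)) else 0) :=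
    (Measurable.ite (measurableSet_lt measurable_const measurable_norm) (hm _)
      measurable_const).ennreal_ofReal
  refine (lintegral_mono_ae hpt).trans ?_
  rw [lintegral_add_right _ (m3.const_mul _),
    lintegral_add_left (m1.const_mul _), lintegral_const_mul _ m1, lintegral_const_mul _ m2',
    lintegral_const_mul _ m3,
    lintegral_sub_left_eq_self (fun y : E3 =>
      ENNReal.ofReal (if ‖y‖ ≤ r / 2 then ‖y‖ ^ (-1:ℝ) else 0)) x]
  refine (add_le_add (add_le_add (mul_le_mul_right (H1 _ hρ) _)
    (mul_le_mul_right (H2 _ hρ) _)) (mul_le_mul_right (H3 _ hρ) _)).trans ?_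
  rw [← ENNReal.ofReal_mul (by positivity),
      ← ENNReal.ofReal_mul (by positivity), ← ENNReal.ofReal_mul (by positivity),
      ← ENNReal.ofReal_add (by positivity) (by positivity),
      ← ENNReal.ofReal_add (by positivity) (by positivity)]
  apply ENNReal.ofReal_le_ofReal
  apply le_of_eq
  have e0 : (1 / 2 : ℝ) ^ (2 - b) * r ^ (2 - b) = (r / 2) ^ (2 - b) := by
    rw [← Real.mul_rpow (by norm_num) hr.le]
    congr 1; ring
  have e1 : 2 / r * (r / 2) ^ (3 - b) = (r / 2) ^ (2 - b) := by
    rw [show 3 - b = (2 - b) + 1 by ring, Real.rpow_add hρ, Real.rpow_one]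
    field_simp
  have e2 : (r / 2) ^ (-b) * (r / 2) ^ ((3 : ℝ) - 1) = (r / 2) ^ (2 - b) := by
    rw [← Real.rpow_add hρ]; congr 1; ring
  rw [show 3 - (b + 1) = 2 - b by ring, mul_assoc, e0]
  calc _ = C1 * (2 / r * (r / 2) ^ (3 - b)) + C2 * ((r / 2) ^ (-b) * (r / 2) ^ ((3 : ℝ) - 1))
        + 3 * C3 * (r / 2) ^ (2 - b) := by ring
    _ = _ := by rw [e1, e2]; ring

lemma sw_holder (a : ℝ) (f : E3 → ℝ≥0∞) (hf : Measurable f) (x : E3) :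
    (∫⁻ y : E3, f y / ENNReal.ofReal ‖x - y‖) ^ 2 ≤
      (∫⁻ y : E3, f y ^ 2 * ENNReal.ofReal (‖y‖ ^ a) * (ENNReal.ofReal ‖x - y‖)⁻¹) *
      ∫⁻ y : E3, ENNReal.ofReal (‖y‖ ^ (-a)) * (ENNReal.ofReal ‖x - y‖)⁻¹ := by
  have hm (c : ℝ) : Measurable fun y : E3 => ‖y‖ ^ c := by fun_prop
  have mk : Measurable fun y : E3 => (ENNReal.ofReal ‖x - y‖)⁻¹ := by fun_prop
  have mF : Measurable fun y : E3 =>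
      f y ^ 2 * ENNReal.ofReal (‖y‖ ^ a) * (ENNReal.ofReal ‖x - y‖)⁻¹ :=
    ((hf.pow_const 2).mul (hm a).ennreal_ofReal).mul mk
  have mG : Measurable fun y : E3 => ENNReal.ofReal (‖y‖ ^ (-a)) * (ENNReal.ofReal ‖x - y‖)⁻¹ :=
    (hm (-a)).ennreal_ofReal.mul mk
  have H := ENNReal.lintegral_mul_norm_pow_le (μ := volume) mF.aemeasurable mG.aemeasurable
    (p := 1 / 2) (q := 1 / 2) (by norm_num) (by norm_num) (by norm_num)
  have hE : ∫⁻ y : E3, f y / ENNReal.ofReal ‖x - y‖ =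
      ∫⁻ y : E3, (f y ^ 2 * ENNReal.ofReal (‖y‖ ^ a) * (ENNReal.ofReal ‖x - y‖)⁻¹) ^ (1 / 2 : ℝ) *
        (ENNReal.ofReal (‖y‖ ^ (-a)) * (ENNReal.ofReal ‖x - y‖)⁻¹) ^ (1 / 2 : ℝ) := by
    apply lintegral_congr_ae
    filter_upwards [Measure.ae_ne volume 0] with y hy
    have hn : 0 < ‖y‖ := norm_pos_iff.mpr hy
    rw [← ENNReal.mul_rpow_of_nonneg _ _ (by norm_num)]
    have e : f y ^ 2 * ENNReal.ofReal (‖y‖ ^ a) * (ENNReal.ofReal ‖x - y‖)⁻¹ *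
        (ENNReal.ofReal (‖y‖ ^ (-a)) * (ENNReal.ofReal ‖x - y‖)⁻¹) =
        (f y / ENNReal.ofReal ‖x - y‖) ^ (2 : ℝ) := by
      have e1 : ENNReal.ofReal (‖y‖ ^ a) * ENNReal.ofReal (‖y‖ ^ (-a)) = 1 := by
        rw [← ENNReal.ofReal_mul (by positivity), ← Real.rpow_add hn]
        simp
      rw [ENNReal.rpow_two, div_eq_mul_inv]
      calc _ = (f y * (ENNReal.ofReal ‖x - y‖)⁻¹) ^ 2 *
            (ENNReal.ofReal (‖y‖ ^ a) * ENNReal.ofReal (‖y‖ ^ (-a))) := by ring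
        _ = _ := by rw [e1, mul_one]
    rw [e, ← ENNReal.rpow_mul]
    norm_num
  rw [hE]
  refine (pow_le_pow_left' H 2).trans (le_of_eq ?_)
  rw [← ENNReal.mul_rpow_of_nonneg _ _ (by norm_num), ← ENNReal.rpow_two, ← ENNReal.rpow_mul]
  norm_num

/-- Stein–Weiss estimate for the Newtonian potential. -/
theorem stein_weiss_newtonian_potential (s : ℝ) (hs1 : 1/2 < s) (hs2 : s < 3/2) :
    ∃ C : ℝ, 0 < C ∧
      ∀ f : E3 → ℝ≥0∞, Measurable f →
        ∀ u : E3 → ℝ≥0∞, (∀ x, u x = ∫⁻ y : E3, f y / ENNReal.ofReal ‖x - y‖) →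
          (∫⁻ x : E3, ENNReal.ofReal (‖x‖ ^ (2*(s - 2))) * (u x)^2) ^ (1/2 : ℝ) ≤
            ENNReal.ofReal C *
              (∫⁻ x : E3, ENNReal.ofReal (‖x‖ ^ (2*s)) * (f x)^2) ^ (1/2 : ℝ) := by
  obtain ⟨A, hA, HA⟩ := sw_key (s + 3/2) (by linarith) (by linarith)
  obtain ⟨B, hB, HB⟩ := sw_key (7/2 - s) (by linarith) (by linarith)
  refine ⟨(A * B) ^ (1/2 : ℝ) + 1, by positivity, fun f hf u hu => ?_⟩
  have hm (c : ℝ) : Measurable fun y : E3 => ‖y‖ ^ c := by fun_prop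
  have hk : Measurable fun z : E3 × E3 => (ENNReal.ofReal ‖z.1 - z.2‖)⁻¹ := by fun_prop
  set a := s + 3/2 with ha
  set b := 7/2 - s with hb
  have mfa : Measurable fun y : E3 => f y ^ 2 * ENNReal.ofReal (‖y‖ ^ a) :=
    (hf.pow_const 2).mul (hm a).ennreal_ofReal
  have mF : Measurable fun z : E3 × E3 =>
      ENNReal.ofReal (‖z.1‖ ^ (-b)) * (f z.2 ^ 2 * ENNReal.ofReal (‖z.2‖ ^ a) *
        (ENNReal.ofReal ‖z.1 - z.2‖)⁻¹) :=
    ((hm (-b)).ennreal_ofReal.comp measurable_fst).mul ((mfa.comp measurable_snd).mul hk)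
  have main : ∫⁻ x : E3, ENNReal.ofReal (‖x‖ ^ (2*(s - 2))) * (u x)^2 ≤
      ENNReal.ofReal (A * B) * ∫⁻ x : E3, ENNReal.ofReal (‖x‖ ^ (2*s)) * (f x)^2 := by
    calc ∫⁻ x : E3, ENNReal.ofReal (‖x‖ ^ (2*(s - 2))) * (u x)^2
        ≤ ∫⁻ x : E3, ENNReal.ofReal A * ∫⁻ y : E3, ENNReal.ofReal (‖x‖ ^ (-b)) *
            (f y ^ 2 * ENNReal.ofReal (‖y‖ ^ a) * (ENNReal.ofReal ‖x - y‖)⁻¹) := by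
          apply lintegral_mono_ae
          filter_upwards [Measure.ae_ne volume 0] with x hx
          have hn : 0 < ‖x‖ := norm_pos_iff.mpr hx
          have h1 := (sw_holder a f hf x).trans (mul_le_mul_right (HA x hx) _)
          rw [← hu x] at h1
          refine (mul_le_mul_right h1 _).trans (le_of_eq ?_)
          rw [lintegral_const_mul' _ _ ENNReal.ofReal_ne_top, ENNReal.ofReal_mul hA]
          have e : ENNReal.ofReal (‖x‖ ^ (2*(s-2))) * ENNReal.ofReal (‖x‖ ^ (2 - a)) =
              ENNReal.ofReal (‖x‖ ^ (-b)) := by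
            rw [← ENNReal.ofReal_mul (by positivity), ← Real.rpow_add hn]
            congr 2
            rw [ha, hb]; ring
          rw [← e]
          ring
      _ = ENNReal.ofReal A * ∫⁻ y : E3, ∫⁻ x : E3, ENNReal.ofReal (‖x‖ ^ (-b)) *
            (f y ^ 2 * ENNReal.ofReal (‖y‖ ^ a) * (ENNReal.ofReal ‖x - y‖)⁻¹) := by
          rw [lintegral_const_mul' _ _ ENNReal.ofReal_ne_top]
          congr 1
          exact lintegral_lintegral_swap mF.aemeasurable
      _ ≤ ENNReal.ofReal A * ∫⁻ y : E3, ENNReal.ofReal B *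
            (ENNReal.ofReal (‖y‖ ^ (2*s)) * (f y)^2) := by
          refine mul_le_mul_right ?_ _
          apply lintegral_mono_ae
          filter_upwards [Measure.ae_ne volume 0] with y hy
          have hn : 0 < ‖y‖ := norm_pos_iff.mpr hy
          have mk : Measurable fun x : E3 =>
              ENNReal.ofReal (‖x‖ ^ (-b)) * (ENNReal.ofReal ‖y - x‖)⁻¹ :=
            (hm (-b)).ennreal_ofReal.mul (by fun_prop)
          calc _ = ∫⁻ x : E3, (f y ^ 2 * ENNReal.ofReal (‖y‖ ^ a)) *
                (ENNReal.ofReal (‖x‖ ^ (-b)) * (ENNReal.ofReal ‖y - x‖)⁻¹) := by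
                refine lintegral_congr fun x => ?_
                rw [norm_sub_rev x y]
                ring
            _ ≤ (f y ^ 2 * ENNReal.ofReal (‖y‖ ^ a)) * ENNReal.ofReal (B * ‖y‖ ^ (2 - b)) := by
                rw [lintegral_const_mul _ mk]
                exact mul_le_mul_right (HB y hy) _
            _ = _ := by
                have e : ENNReal.ofReal (‖y‖ ^ a) * ENNReal.ofReal (‖y‖ ^ (2 - b)) =
                    ENNReal.ofReal (‖y‖ ^ (2*s)) := by
                  rw [← ENNReal.ofReal_mul (by positivity), ← Real.rpow_add hn]
                  congr 2
                  rw [ha, hb]; ring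
                rw [ENNReal.ofReal_mul hB, ← e]
                ring
      _ = _ := by
          rw [lintegral_const_mul' _ _ ENNReal.ofReal_ne_top, ENNReal.ofReal_mul hA, mul_assoc]
  refine (ENNReal.rpow_le_rpow main (by norm_num)).trans ?_
  rw [ENNReal.mul_rpow_of_nonneg _ _ (by norm_num),
    ENNReal.ofReal_rpow_of_nonneg (by positivity) (by norm_num)]
  exact mul_le_mul_left (ENNReal.ofReal_le_ofReal (by linarith)) _
end
end

section
/- Stein–Weiss estimate for the gradient of the Newtonian potential: for every s with −1/2 < s < 3/2 there is a constant C_s such that for every measurable f : ℝ³ → [0,∞], the function u(x) := ∫_{ℝ³} f(y)/|x−y|² dy satisfies ( ∫_{ℝ³} |x|^{2(s−1)} u(x)² dx )^{1/2} ≤ C_s ( ∫_{ℝ³} |x|^{2s} f(x)² dx )^{1/2} (both sides possibly infinite). -/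
open MeasureTheory
open scoped ENNReal

noncomputable section

/-- Power weight. -/
def wt (p : ℝ) (x : E3) : ℝ≥0∞ := ENNReal.ofReal (‖x‖ ^ p)

lemma wt_meas (p : ℝ) : Measurable (wt p) := by
  unfold wt
  fun_prop

lemma wt_mul (p q : ℝ) {x : E3} (hx : x ≠ 0) : wt p x * wt q x = wt (p + q) x := by
  unfold wt
  rw [← ENNReal.ofReal_mul (by positivity), Real.rpow_add (norm_pos_iff.mpr hx)]

lemma wt_smul (p : ℝ) {r : ℝ} (hr : 0 < r) (x : E3) :
    wt p (r • x) = ENNReal.ofReal (r ^ p) * wt p x := by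
  unfold wt
  rw [norm_smul, Real.norm_of_nonneg hr.le, Real.mul_rpow hr.le (norm_nonneg _),
    ENNReal.ofReal_mul (by positivity)]

lemma ae_ne (x : E3) : ∀ᵐ y : E3, y ≠ x := by
  simp [ae_iff]

lemma near_fin (a : ℝ) (ha : a < 3) :
    (∫⁻ y : E3, ENNReal.ofReal ((Set.Iio (1/2 : ℝ)).indicator (fun t => t ^ (-a)) ‖y‖)) ≠ ⊤ := by
  have h : Integrable (fun y : E3 => (Set.Iio (1/2 : ℝ)).indicator (fun t => t ^ (-a)) ‖y‖) := by
    rw [integrable_fun_norm_addHaar (volume : Measure E3)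
      (f := (Set.Iio (1/2 : ℝ)).indicator (fun t => t ^ (-a)))]
    have h1 : IntegrableOn (fun t : ℝ => t ^ (2 - a)) (Set.Ioo 0 (1/2)) :=
      (intervalIntegral.integrableOn_Ioo_rpow_iff (by norm_num)).2 (by linarith)
    rw [← integrable_indicator_iff measurableSet_Ioo] at h1
    refine (h1.integrableOn (s := Set.Ioi 0)).congr_fun ?_ measurableSet_Ioi
    intro t ht
    have ht' : (0 : ℝ) < t := ht
    by_cases h2 : t < 1/2
    · have : t ^ (2 - a) = t ^ 2 * t ^ (-a) := by
        rw [sub_eq_add_neg, Real.rpow_add ht']; norm_num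
      simp only [Set.indicator, Set.mem_Ioo, Set.mem_Iio, ht', h2]
      simp [this]
    · simp only [Set.indicator, Set.mem_Ioo, Set.mem_Iio, h2]
      simp
  exact h.lintegral_lt_top.ne

lemma far_fin (a : ℝ) (ha : 3 < a) :
    (∫⁻ y : E3, ENNReal.ofReal ((Set.Ici (1/2 : ℝ)).indicator (fun t => t ^ (-a)) ‖y‖)) ≠ ⊤ := by
  have h : Integrable (fun y : E3 => (Set.Ici (1/2 : ℝ)).indicator (fun t => t ^ (-a)) ‖y‖) := by
    rw [integrable_fun_norm_addHaar (volume : Measure E3)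
      (f := (Set.Ici (1/2 : ℝ)).indicator (fun t => t ^ (-a)))]
    have h1 : IntegrableOn (fun t : ℝ => t ^ (2 - a)) (Set.Ici (1/2)) :=
      (integrableOn_Ici_iff_integrableOn_Ioi (by simp)).2
        (integrableOn_Ioi_rpow_of_lt (by linarith) (by norm_num))
    rw [← integrable_indicator_iff measurableSet_Ici] at h1
    refine (h1.integrableOn (s := Set.Ioi 0)).congr_fun ?_ measurableSet_Ioi
    intro t ht
    have ht' : (0 : ℝ) < t := ht
    by_cases h2 : 1/2 ≤ t
    · have : t ^ (2 - a) = t ^ 2 * t ^ (-a) := by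
        rw [sub_eq_add_neg, Real.rpow_add ht']; norm_num
      simp only [Set.indicator, Set.mem_Ici, h2]
      simp [this]
    · simp only [Set.indicator, Set.mem_Ici, h2]
      simp
  exact h.lintegral_lt_top.ne

lemma pointwise (a : ℝ) (ha : 1 < a) (x y : E3) (hx : ‖x‖ = 1) :
    ‖y‖ ^ (-a) * ‖x - y‖ ^ (-2 : ℝ) ≤
      4 * (Set.Iio (1/2 : ℝ)).indicator (fun t => t ^ (-a)) ‖y‖
      + 2 ^ a * (Set.Iio (1/2 : ℝ)).indicator (fun t => t ^ (-(2:ℝ))) ‖x - y‖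
      + 9 * (Set.Ici (1/2 : ℝ)).indicator (fun t => t ^ (-(a+2))) ‖y‖ := by
  have tri : ‖x‖ ≤ ‖x - y‖ + ‖y‖ := by simpa using norm_add_le (x - y) y
  have tri2 : ‖y‖ ≤ ‖x‖ + ‖x - y‖ := by
    have := norm_sub_le x (x - y); simpa using this
  rw [hx] at tri tri2
  have ny := norm_nonneg y
  have nxy := norm_nonneg (x - y)
  generalize ‖y‖ = t at *
  generalize ‖x - y‖ = d at *
  have p1 : 0 ≤ t ^ (-a) := by positivity
  have p2 : 0 ≤ d ^ (-2 : ℝ) := by positivity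
  have p3 : 0 ≤ t ^ (-(a+2)) := by positivity
  by_cases ht : t < 1/2
  · have hd : ¬ d < 1/2 := by linarith
    have ht2 : ¬ 1/2 ≤ t := by linarith
    simp only [Set.indicator, Set.mem_Iio, Set.mem_Ici, ht, hd, ht2, if_true, if_false]
    have : d ^ (-2 : ℝ) ≤ (1/2 : ℝ) ^ (-2 : ℝ) :=
      Real.rpow_le_rpow_of_nonpos (by norm_num) (by linarith) (by norm_num)
    have e : (1/2 : ℝ) ^ (-2 : ℝ) = 4 := by
      rw [Real.rpow_neg (by norm_num)]; norm_num
    rw [e] at this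
    nlinarith
  · have ht2 : 1/2 ≤ t := by linarith
    by_cases hd : d < 1/2
    · simp only [Set.indicator, Set.mem_Iio, Set.mem_Ici, ht, hd, ht2, if_true, if_false]
      have : t ^ (-a) ≤ (1/2 : ℝ) ^ (-a) :=
        Real.rpow_le_rpow_of_nonpos (by norm_num) (by linarith) (by linarith)
      have e : (1/2 : ℝ) ^ (-a) = 2 ^ a := by
        rw [Real.rpow_neg (by norm_num), one_div, Real.inv_rpow (by norm_num), inv_inv]
      rw [e] at this
      nlinarith
    · simp only [Set.indicator, Set.mem_Iio, Set.mem_Ici, ht, hd, ht2, if_true, if_false]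
      have : d ^ (-2 : ℝ) ≤ (t/3 : ℝ) ^ (-2 : ℝ) :=
        Real.rpow_le_rpow_of_nonpos (by linarith) (by linarith) (by norm_num)
      have e : (t/3 : ℝ) ^ (-2 : ℝ) = 9 * t ^ (-2 : ℝ) := by
        rw [Real.div_rpow ny (by norm_num), Real.rpow_neg (by norm_num : (0:ℝ) ≤ 3)]
        norm_num
        ring
      have e2 : t ^ (-(a+2)) = t ^ (-a) * t ^ (-2 : ℝ) := by
        rw [← Real.rpow_add (by linarith)]; ring_nf
      rw [e] at this
      rw [e2]
      nlinarith

lemma unit_bound (a : ℝ) (ha : 1 < a) (ha3 : a < 3) :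
    ∃ C : ℝ≥0∞, C ≠ ⊤ ∧ ∀ x : E3, ‖x‖ = 1 → ∫⁻ y : E3, wt (-a) y * wt (-2) (x - y) ≤ C := by
  set A := (∫⁻ y : E3, ENNReal.ofReal ((Set.Iio (1/2 : ℝ)).indicator (fun t => t ^ (-a)) ‖y‖))
    with hA
  set B := (∫⁻ y : E3, ENNReal.ofReal
    ((Set.Iio (1/2 : ℝ)).indicator (fun t => t ^ (-(2:ℝ))) ‖y‖)) with hB
  set D := (∫⁻ y : E3, ENNReal.ofReal
    ((Set.Ici (1/2 : ℝ)).indicator (fun t => t ^ (-(a+2))) ‖y‖)) with hD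
  have fA : A ≠ ⊤ := near_fin a ha3
  have fB : B ≠ ⊤ := near_fin 2 (by norm_num)
  have fD : D ≠ ⊤ := far_fin (a+2) (by linarith)
  have meas1 : ∀ c : ℝ, Measurable ((Set.Iio (1/2 : ℝ)).indicator (fun t : ℝ => t ^ c)) :=
    fun c => Measurable.indicator (by fun_prop) measurableSet_Iio
  have meas2 : ∀ c : ℝ, Measurable ((Set.Ici (1/2 : ℝ)).indicator (fun t : ℝ => t ^ c)) :=
    fun c => Measurable.indicator (by fun_prop) measurableSet_Ici
  refine ⟨ENNReal.ofReal 4 * A + ENNReal.ofReal (2 ^ a) * B + ENNReal.ofReal 9 * D, ?_, ?_⟩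
  · have := ENNReal.mul_ne_top (ENNReal.ofReal_ne_top (r := 4)) fA
    have := ENNReal.mul_ne_top (ENNReal.ofReal_ne_top (r := 2 ^ a)) fB
    have := ENNReal.mul_ne_top (ENNReal.ofReal_ne_top (r := 9)) fD
    simp_all
  intro x hx
  have i1 : ∀ t, 0 ≤ (Set.Iio (1/2 : ℝ)).indicator (fun t => t ^ (-a)) ‖(t:E3)‖ := fun t =>
    Set.indicator_apply_nonneg fun _ => by positivity
  have i2 : ∀ t, 0 ≤ (Set.Iio (1/2 : ℝ)).indicator (fun t => t ^ (-(2:ℝ))) ‖(t:E3)‖ := fun t =>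
    Set.indicator_apply_nonneg fun _ => by positivity
  have i3 : ∀ t, 0 ≤ (Set.Ici (1/2 : ℝ)).indicator (fun t => t ^ (-(a+2))) ‖(t:E3)‖ := fun t =>
    Set.indicator_apply_nonneg fun _ => by positivity
  calc ∫⁻ y : E3, wt (-a) y * wt (-2) (x - y)
      ≤ ∫⁻ y : E3, (ENNReal.ofReal 4 *
          ENNReal.ofReal ((Set.Iio (1/2 : ℝ)).indicator (fun t => t ^ (-a)) ‖y‖)
          + ENNReal.ofReal (2 ^ a) *
          ENNReal.ofReal ((Set.Iio (1/2 : ℝ)).indicator (fun t => t ^ (-(2:ℝ))) ‖x - y‖)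
          + ENNReal.ofReal 9 *
          ENNReal.ofReal ((Set.Ici (1/2 : ℝ)).indicator (fun t => t ^ (-(a+2))) ‖y‖)) := by
        refine lintegral_mono fun y => ?_
        have h1 := i1 y
        have h2 := i2 (x - y)
        have h3 := i3 y
        rw [← ENNReal.ofReal_mul (by norm_num), ← ENNReal.ofReal_mul (by positivity),
          ← ENNReal.ofReal_mul (by norm_num), ← ENNReal.ofReal_add (by positivity) (by positivity),
          ← ENNReal.ofReal_add (by positivity) (by positivity)]
        unfold wt
        rw [← ENNReal.ofReal_mul (by positivity)]
        exact ENNReal.ofReal_le_ofReal (pointwise a ha x y hx)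
    _ = _ := by
        have m1 := meas1 (-a)
        have m2 := meas1 (-2)
        have m3 := meas2 (-(a+2))
        rw [lintegral_add_left (by fun_prop), lintegral_add_left (by fun_prop),
          lintegral_const_mul _ (by fun_prop), lintegral_const_mul _ (by fun_prop),
          lintegral_const_mul _ (by fun_prop)]
        rw [lintegral_sub_left_eq_self (fun y : E3 => ENNReal.ofReal
          ((Set.Iio (1/2 : ℝ)).indicator (fun t => t ^ (-(2:ℝ))) ‖y‖)) x]

lemma scale (F : E3 → ℝ≥0∞) (hF : Measurable F) {r : ℝ} (hr : 0 < r) :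
    ∫⁻ y, F y = ENNReal.ofReal (r ^ (3:ℝ)) * ∫⁻ z, F (r • z) := by
  have h := Measure.map_addHaar_smul (volume : Measure E3) hr.ne'
  have h2 : ∫⁻ z, F (r • z) = ∫⁻ y, F y ∂(Measure.map (r • ·) (volume : Measure E3)) := by
    rw [lintegral_map hF (by fun_prop)]
  rw [h2, h, lintegral_smul_measure, smul_eq_mul, ← mul_assoc,
    ← ENNReal.ofReal_mul (by positivity)]
  have : r ^ (3:ℝ) * |(r ^ Module.finrank ℝ E3)⁻¹| = 1 := by
    have : r ^ (3:ℝ) = r ^ 3 := by exact_mod_cast Real.rpow_natCast r 3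
    rw [abs_of_pos (by positivity), this]
    simp
    field_simp
  rw [this]; simp

lemma key (a : ℝ) (ha : 1 < a) (ha3 : a < 3) :
    ∃ C : ℝ≥0∞, C ≠ ⊤ ∧ ∀ x : E3, x ≠ 0 →
      ∫⁻ y : E3, wt (-a) y * wt (-2) (x - y) ≤ C * wt (1 - a) x := by
  obtain ⟨C, hC, h⟩ := unit_bound a ha ha3
  refine ⟨C, hC, fun x hx => ?_⟩
  have hr : 0 < ‖x‖ := norm_pos_iff.mpr hx
  set r := ‖x‖ with hrdef
  have m1 := wt_meas (-a)
  have m2 := wt_meas (-2)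
  rw [scale _ (by fun_prop) hr]
  have hxe : x = r • (r⁻¹ • x) := by rw [smul_smul, mul_inv_cancel₀ hr.ne', one_smul]
  have he : ‖r⁻¹ • x‖ = 1 := by
    rw [norm_smul, norm_inv, Real.norm_of_nonneg hr.le, ← hrdef, inv_mul_cancel₀ hr.ne']
  have e : ∀ z : E3, wt (-a) (r • z) * wt (-2) (x - r • z) =
      ENNReal.ofReal (r ^ (-a) * r ^ (-2 : ℝ)) * (wt (-a) z * wt (-2) (r⁻¹ • x - z)) := by
    intro z
    have : x - r • z = r • (r⁻¹ • x - z) := by rw [smul_sub, ← hxe]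
    rw [this, wt_smul _ hr, wt_smul _ hr, ENNReal.ofReal_mul (by positivity)]
    ring
  simp_rw [e]
  rw [lintegral_const_mul _ (by fun_prop), ← mul_assoc, ← ENNReal.ofReal_mul (by positivity),
    ← Real.rpow_add hr, ← Real.rpow_add hr, mul_comm C]
  have : (3 : ℝ) + (-a + -2) = 1 - a := by ring
  rw [this]
  exact mul_le_mul' le_rfl (h _ he)

lemma cs (g h : E3 → ℝ≥0∞) (hg : Measurable g) (hh : Measurable h) :
    (∫⁻ y, g y * h y) ^ 2 ≤ (∫⁻ y, g y ^ 2) * ∫⁻ y, h y ^ 2 := by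
  have := ENNReal.lintegral_mul_le_Lp_mul_Lq (volume : Measure E3) Real.HolderConjugate.two_two
    hg.aemeasurable hh.aemeasurable
  simp only [Pi.mul_apply, ENNReal.rpow_two] at this
  calc _ ≤ _ := pow_le_pow_left' this 2
    _ = _ := by
      rw [mul_pow, ← ENNReal.rpow_two, ← ENNReal.rpow_two, ← ENNReal.rpow_mul, ← ENNReal.rpow_mul]
      norm_num

lemma wt_sq (p : ℝ) {x : E3} (hx : x ≠ 0) : wt p x ^ 2 = wt (2 * p) x := by
  rw [pow_two, wt_mul _ _ hx]; ring_nf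

/-- Stein–Weiss estimate for the gradient of the Newtonian potential. -/
theorem stein_weiss_gradient_newtonian_potential (s : ℝ) (hs1 : -(1/2) < s) (hs2 : s < 3/2) :
    ∃ C : ℝ, 0 < C ∧
      ∀ f : E3 → ℝ≥0∞, Measurable f →
        ∀ u : E3 → ℝ≥0∞, (∀ x, u x = ∫⁻ y : E3, f y / ENNReal.ofReal (‖x - y‖^2)) →
          (∫⁻ x : E3, ENNReal.ofReal (‖x‖ ^ (2*(s - 1))) * (u x)^2) ^ (1/2 : ℝ) ≤
            ENNReal.ofReal C *
              (∫⁻ x : E3, ENNReal.ofReal (‖x‖ ^ (2*s)) * (f x)^2) ^ (1/2 : ℝ) := by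
  obtain ⟨A, hA, keyA⟩ := key (s + 3/2) (by linarith) (by linarith)
  obtain ⟨B, hB, keyB⟩ := key (5/2 - s) (by linarith) (by linarith)
  have hAB : (A * B) ≠ ⊤ := ENNReal.mul_ne_top hA hB
  have hABr : (A * B) ^ (1/2 : ℝ) ≠ ⊤ := ENNReal.rpow_ne_top_of_nonneg (by norm_num) hAB
  refine ⟨((A * B) ^ (1/2 : ℝ)).toReal + 1, by positivity, ?_⟩
  intro f hf u hu
  have hC : (A * B) ^ (1/2 : ℝ) ≤ ENNReal.ofReal (((A * B) ^ (1/2 : ℝ)).toReal + 1) := by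
    rw [← ENNReal.ofReal_toReal hABr]
    apply ENNReal.ofReal_le_ofReal
    rw [ENNReal.toReal_ofReal (by positivity)]
    linarith
  refine le_trans ?_ (mul_le_mul' hC le_rfl)
  rw [← ENNReal.mul_rpow_of_nonneg _ _ (by norm_num)]
  apply ENNReal.rpow_le_rpow _ (by norm_num)
  change ∫⁻ x, wt (2*(s-1)) x * u x ^ 2 ≤ A * B * ∫⁻ x, wt (2*s) x * f x ^ 2
  have m := wt_meas
  -- Cauchy-Schwarz
  have hu2 : ∀ x : E3, x ≠ 0 → u x ^ 2 ≤ (A * wt (-s - 1/2) x) *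
      ∫⁻ y, f y ^ 2 * wt (s + 3/2) y * wt (-2) (x - y) := by
    intro x hx
    have e : u x = ∫⁻ y, (wt (-(s+3/2)/2) y * wt (-1) (x - y)) *
        (f y * wt ((s+3/2)/2) y * wt (-1) (x - y)) := by
      rw [hu]
      refine lintegral_congr_ae ?_
      filter_upwards [ae_ne 0, ae_ne x] with y hy hyx
      have hxy : x - y ≠ 0 := sub_ne_zero.mpr hyx.symm
      have hp : 0 < ‖x - y‖ := norm_pos_iff.mpr hxy
      calc f y / ENNReal.ofReal (‖x - y‖^2) = f y * wt (-2) (x - y) := by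
            rw [div_eq_mul_inv, ← ENNReal.ofReal_inv_of_pos (by positivity)]
            unfold wt
            rw [Real.rpow_neg hp.le]
            norm_num
        _ = f y * (wt (-(s+3/2)/2) y * wt ((s+3/2)/2) y) * (wt (-1) (x-y) * wt (-1) (x-y)) := by
            rw [wt_mul _ _ hy, wt_mul _ _ hxy]
            have : -(s+3/2)/2 + (s+3/2)/2 = 0 := by ring
            rw [this]
            norm_num [wt]
        _ = _ := by ring
    rw [e]
    have m1 := m (-(s+3/2)/2)
    have m2 := m (-1)
    have m3 := m ((s+3/2)/2)
    refine (cs _ _ (by fun_prop) (by fun_prop)).trans ?_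
    refine mul_le_mul' ?_ (le_of_eq ?_)
    · have := keyA x hx
      have e1 : 1 - (s + 3/2) = -s - 1/2 := by ring
      rw [e1] at this
      refine le_trans (le_of_eq ?_) this
      refine lintegral_congr_ae ?_
      filter_upwards [ae_ne 0, ae_ne x] with y hy hyx
      have hxy : x - y ≠ 0 := sub_ne_zero.mpr hyx.symm
      rw [mul_pow, wt_sq _ hy, wt_sq _ hxy]
      ring_nf
    · refine lintegral_congr_ae ?_
      filter_upwards [ae_ne 0, ae_ne x] with y hy hyx
      have hxy : x - y ≠ 0 := sub_ne_zero.mpr hyx.symm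
      rw [mul_pow, mul_pow, wt_sq _ hy, wt_sq _ hxy]
      ring_nf
  have m1 := m (s - 5/2)
  have m2 := m (-2)
  have m3 := m (s + 3/2)
  calc ∫⁻ x, wt (2*(s-1)) x * u x ^ 2
      ≤ ∫⁻ x, A * ∫⁻ y, wt (s - 5/2) x * (f y ^ 2 * wt (s + 3/2) y * wt (-2) (x - y)) := by
        refine lintegral_mono_ae ?_
        filter_upwards [ae_ne 0] with x hx
        rw [lintegral_const_mul _ (by fun_prop)]
        refine (mul_le_mul' le_rfl (hu2 x hx)).trans (le_of_eq ?_)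
        have e1 : s - 5/2 = 2*(s-1) + (-s-1/2) := by ring
        rw [e1, ← wt_mul _ _ hx]
        ring
    _ = A * ∫⁻ x, ∫⁻ y, wt (s - 5/2) x * (f y ^ 2 * wt (s + 3/2) y * wt (-2) (x - y)) := by
        rw [lintegral_const_mul' _ _ hA]
    _ = A * ∫⁻ y, ∫⁻ x, wt (s - 5/2) x * (f y ^ 2 * wt (s + 3/2) y * wt (-2) (x - y)) := by
        rw [lintegral_lintegral_swap]
        apply Measurable.aemeasurable
        unfold Function.uncurry
        fun_prop
    _ ≤ A * ∫⁻ y, B * (wt (2*s) y * f y ^ 2) := by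
        refine mul_le_mul' le_rfl (lintegral_mono_ae ?_)
        filter_upwards [ae_ne 0] with y hy
        have := keyB y hy
        calc ∫⁻ x, wt (s - 5/2) x * (f y ^ 2 * wt (s + 3/2) y * wt (-2) (x - y))
            = ∫⁻ x, (f y ^ 2 * wt (s + 3/2) y) * (wt (-(5/2 - s)) x * wt (-2) (y - x)) := by
              refine lintegral_congr fun x => ?_
              have : wt (-2) (x - y) = wt (-2) (y - x) := by
                unfold wt; rw [norm_sub_rev]
              rw [this, neg_sub]
              ring
          _ = (f y ^ 2 * wt (s + 3/2) y) * ∫⁻ x, wt (-(5/2 - s)) x * wt (-2) (y - x) := by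
              have := m (-(5/2 - s))
              rw [lintegral_const_mul _ (by fun_prop)]
          _ ≤ (f y ^ 2 * wt (s + 3/2) y) * (B * wt (1 - (5/2 - s)) y) := mul_le_mul' le_rfl this
          _ = B * ((wt (s + 3/2) y * wt (1 - (5/2 - s)) y) * f y ^ 2) := by ring
          _ = _ := by
              rw [wt_mul _ _ hy]; ring_nf
    _ = _ := by
        rw [lintegral_const_mul' _ _ hB, mul_assoc]
end
end
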